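/- arXiv:2404.15476 — 4 statements merged into one kernel-verified Lean document; each statement's English description precedes it below -/
import Mathlib

section
/- Let G be a group admitting a chaotic almost minimal action on some compact metric space, and let H be a subgroup of G of finite index. Then H admits a chaotic almost minimal action on some compact metric space. -/
/-!
The restriction of the action on `X` to a finite-index subgroup `H`, cut down to the closure `Y` of
the `H`-orbit of a point `x₀` with infinite `G`-orbit, has all the required properties except that
it need not be faithful. Indeed a closed infinite `H`-invariant set has finitely many `G`-translates,
whose union is closed, infinite and `G`-invariant, hence is `X`; so such a set has interior by Baire
(`interior_nonempty_of_infinite`), and a subset of `Y` of this kind contains a translate of `x₀`.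

Faithfulness is restored by a profinite extension that is collapsed over the periodic points. The
set `smallOrbit T n` of points with at most `n` translates is closed and `G`-invariant, hence finite,
and the union of these sets is dense. So `G` acts faithfully on the compact space
`Fibre T = ∏ n, (smallOrbit T n → smallOrbit T n)`, on tuples of surjective maps. In `X × Fibre T`
let `E` be minimal among closed `H`-invariant sets of such tuples meeting the fibre over `x₀`
(`exists_minimal_invariant`). A closed invariant proper subset of `E` has finite projection to `X`,
and by minimality the points of `E` over periodic points are dense in `E`.

The map `collapse` scales the `n`-th fibre coordinate by the distance to `smallOrbit T n`. It leaves
only finitely many points over each periodic point (`finite_collapse`), and identifies no two points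
of the fibre over `x₀`. As `smallOrbit T n` is invariant, the action descends to the image of `E`,
which is then chaotic almost minimal for `H`. If `X` is finite, so is `H`, and it acts on itself.
-/

open Set MeasureTheory

instance homeomorphGroup {X : Type*} [TopologicalSpace X] : Group (X ≃ₜ X) where
  mul f g := g.trans f
  one := Homeomorph.refl X
  inv f := f.symm
  mul_assoc f g h := Homeomorph.ext fun _ => rfl
  one_mul f := Homeomorph.ext fun _ => rfl
  mul_one f := Homeomorph.ext fun _ => rfl
  inv_mul_cancel f := Homeomorph.ext fun x => f.symm_apply_apply x

def shiftHomeo (A : Type*) [TopologicalSpace A] : (ℤ → A) ≃ₜ (ℤ → A) where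
  toFun x := fun n => x (n + 1)
  invFun x := fun n => x (n - 1)
  left_inv x := funext fun n => by simp
  right_inv x := funext fun n => by simp
  continuous_toFun := continuous_pi fun n => continuous_apply (n + 1)
  continuous_invFun := continuous_pi fun n => continuous_apply (n - 1)

def restrictHomeo {X : Type*} [TopologicalSpace X] (e : X ≃ₜ X) (s : Set X)
    (h : ∀ x, x ∈ s ↔ e x ∈ s) : s ≃ₜ s where
  toEquiv := e.toEquiv.subtypeEquiv h
  continuous_toFun := by
    exact Continuous.subtype_mk (e.continuous.comp continuous_subtype_val) _
  continuous_invFun := by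
    exact Continuous.subtype_mk (e.symm.continuous.comp continuous_subtype_val) _

def IsCAMZ {X : Type*} [TopologicalSpace X] (T : X ≃ₜ X) : Prop :=
  (∀ n : ℤ, n ≠ 0 → T ^ n ≠ 1) ∧
  (∀ U V : Set X, IsOpen U → IsOpen V → U.Nonempty → V.Nonempty →
      ∃ n : ℤ, ((T ^ n) '' U ∩ V).Nonempty) ∧
  Dense {x : X | ∃ k : ℕ, 0 < k ∧ (T ^ k) x = x} ∧
  ∀ A : Set X, IsClosed A → T '' A = A → A ≠ Set.univ → A.Finite

def IsCAM {G X : Type*} [Group G] [TopologicalSpace X] (T : G →* (X ≃ₜ X)) : Prop :=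
  Function.Injective T ∧
  (∀ U V : Set X, IsOpen U → IsOpen V → U.Nonempty → V.Nonempty →
      ∃ g : G, ((T g) '' U ∩ V).Nonempty) ∧
  Dense {x : X | (Set.range fun g : G => T g x).Finite} ∧
  ∀ A : Set X, IsClosed A → (∀ g : G, T g '' A = A) → A ≠ Set.univ → A.Finite

universe u

/-! ### Factors of actions -/

/-- A family of continuous self-maps obeying the laws of an action is an action by
homeomorphisms. -/
lemma exists_hom_of_action {H Z : Type*} [Group H] [TopologicalSpace Z] (f : H → Z → Z)
    (hc : ∀ h, Continuous (f h)) (h1 : ∀ z, f 1 z = z) (hm : ∀ a b z, f (a * b) z = f a (f b z)) :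
    ∃ S : H →* (Z ≃ₜ Z), ∀ h z, S h z = f h z := by
  refine ⟨⟨⟨fun h => ⟨⟨f h, f h⁻¹, fun z => ?_, fun z => ?_⟩, hc h, hc h⁻¹⟩, ?_⟩, ?_⟩, ?_⟩
  · rw [← hm, inv_mul_cancel, h1]
  · rw [← hm, mul_inv_cancel, h1]
  · exact Homeomorph.ext fun z => h1 z
  · intro a b
    exact Homeomorph.ext fun z => hm a b z
  · intro h z
    rfl

/-- An action on a compact space descends along a continuous surjection onto a Hausdorff space
as soon as it respects the fibres, because such a surjection is a quotient map. -/
lemma exists_hom_of_factor {H E Z : Type*} [Group H] [TopologicalSpace E] [CompactSpace E]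
    [TopologicalSpace Z] [T2Space Z] (p : E → Z) (hp : Continuous p)
    (hs : Function.Surjective p) (act : H → E → E)
    (hc : ∀ h, Continuous (act h)) (h1 : ∀ z, act 1 z = z)
    (hm : ∀ a b z, act (a * b) z = act a (act b z))
    (hcomp : ∀ h a b, p a = p b → p (act h a) = p (act h b)) :
    ∃ S : H →* (Z ≃ₜ Z), ∀ h e, S h (p e) = p (act h e) := by
  have hq : Topology.IsQuotientMap p := hp.isClosedMap.isQuotientMap hp hs
  have key : ∀ h e, p (act h (Function.surjInv hs (p e))) = p (act h e) := fun h e =>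
    hcomp h _ _ (Function.surjInv_eq hs _)
  obtain ⟨S, hS⟩ := exists_hom_of_action (fun h z => p (act h (Function.surjInv hs z)))
    (fun h => by
      rw [hq.continuous_iff]
      refine (hp.comp (hc h)).congr fun e => (key h e).symm)
    (fun z => by rw [h1]; exact Function.surjInv_eq hs _)
    (fun a b z => by
      rw [key, hm])
  exact ⟨S, fun h e => by rw [hS, key]⟩

/-- Sufficient conditions, stated upstairs on `E`, for a factor `Z` of an action on `E` to be
chaotic almost minimal. -/
lemma exists_isCAM_of_factor {H E Z : Type*} [Group H] [TopologicalSpace E] [CompactSpace E]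
    [TopologicalSpace Z] [T2Space Z] (p : E → Z) (hp : Continuous p)
    (hs : Function.Surjective p) (act : H → E → E)
    (hc : ∀ h, Continuous (act h)) (h1 : ∀ z, act 1 z = z)
    (hm : ∀ a b z, act (a * b) z = act a (act b z))
    (hcomp : ∀ h a b, p a = p b → p (act h a) = p (act h b))
    (hfaith : ∀ h, (∀ e, p (act h e) = p e) → h = 1)
    (e₀ : E) (he₀ : Dense (range fun h => act h e₀))
    (F : Set E) (hF : Dense F) (hFfin : ∀ e ∈ F, (range fun h => p (act h e)).Finite)
    (hmin : ∀ A : Set E, IsClosed A → (∀ h, ∀ e ∈ A, act h e ∈ A) → A ≠ univ →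
      (p '' A).Finite) :
    ∃ S : H →* (Z ≃ₜ Z), IsCAM S := by
  obtain ⟨S, hS⟩ := exists_hom_of_factor p hp hs act hc h1 hm hcomp
  refine ⟨S, ?_, ?_, ?_, ?_⟩
  · rw [injective_iff_map_eq_one]
    intro h hh
    refine hfaith h fun e => ?_
    rw [← hS, hh]
    rfl
  · rintro U V hU hV hUn hVn
    obtain ⟨_, hu, ⟨a, rfl⟩⟩ := he₀.inter_open_nonempty (p ⁻¹' U) (hU.preimage hp)
      (hUn.preimage hs)
    obtain ⟨_, hv, ⟨b, rfl⟩⟩ := he₀.inter_open_nonempty (p ⁻¹' V) (hV.preimage hp)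
      (hVn.preimage hs)
    refine ⟨b * a⁻¹, p (act b e₀), ⟨p (act a e₀), hu, ?_⟩, hv⟩
    rw [hS, ← hm]
    simp
  · refine (hs.denseRange.dense_image hp hF).mono ?_
    rintro _ ⟨e, he, rfl⟩
    simpa only [mem_ofPred_eq, hS] using hFfin e he
  · intro A hA hinv hne
    have := hmin (p ⁻¹' A) (hA.preimage hp) (fun h e he => by
      have h2 : S h (p e) ∈ A := by
        rw [← hinv h]
        exact mem_image_of_mem _ he
      rwa [hS] at h2) (fun h => hne (by
        rw [← image_preimage_eq A hs, h, image_univ, hs.range_eq]))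
    rwa [image_preimage_eq A hs] at this

/-- Finite groups act on themselves by translation; the finite space is taken to be the range of
a faithful representation `T`, so as to control its universe. -/
lemma exists_isCAM_of_finite {H : Type*} [Group H] {K : Type u} [Group K] (T : H →* K)
    (hT : Function.Injective T) [Finite H] :
    ∃ (Y : Type u) (_ : MetricSpace Y) (_ : CompactSpace Y) (S : H →* (Y ≃ₜ Y)),
      IsCAM S := by
  let Y := T.range
  let : TopologicalSpace Y := ⊥
  have : DiscreteTopology Y := ⟨rfl⟩
  have : Finite Y := Set.finite_range T
  obtain ⟨S, hS⟩ := exists_hom_of_action (Z := Y) (fun h z => T.rangeRestrict h * z)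
    (fun h => continuous_of_discreteTopology) (by simp) (by simp [mul_assoc])
  let := TopologicalSpace.metrizableSpaceMetric Y
  refine ⟨Y, inferInstance, inferInstance, S, ?_, ?_, ?_, ?_⟩
  · intro a b hab
    have h1 : S a 1 = S b 1 := by rw [hab]
    rw [hS, hS, mul_one, mul_one] at h1
    exact hT (congrArg Subtype.val h1)
  · rintro U V - - ⟨u, hu⟩ ⟨v, hv⟩
    obtain ⟨h, hh⟩ := T.rangeRestrict_surjective (v * u⁻¹)
    refine ⟨h, v, ⟨u, hu, ?_⟩, hv⟩
    rw [hS, hh]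
    simp
  · have : {x : Y | (range fun h : H => S h x).Finite} = univ :=
      eq_univ_of_forall fun x => Set.toFinite _
    rw [this]
    exact dense_univ
  · intro A _ _ _
    exact A.toFinite

/-! ### Small orbits, and closed sets invariant under a finite-index subgroup -/

section Infinite

variable {G : Type*} [Group G] {X : Type u} [MetricSpace X]

lemma hom_mul_apply (T : G →* (X ≃ₜ X)) (a b : G) (x : X) : T (a * b) x = T a (T b x) := by
  rw [map_mul]
  rfl

lemma hom_one_apply (T : G →* (X ≃ₜ X)) (x : X) : T 1 x = x := by
  rw [map_one]
  rfl

lemma hom_inv_apply (T : G →* (X ≃ₜ X)) (a : G) (x : X) : T a⁻¹ (T a x) = x := by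
  rw [← hom_mul_apply, inv_mul_cancel, hom_one_apply]

lemma hom_apply_inv (T : G →* (X ≃ₜ X)) (a : G) (x : X) : T a (T a⁻¹ x) = x := by
  rw [← hom_mul_apply, mul_inv_cancel, hom_one_apply]

lemma image_eq_of_mapsTo (T : G →* (X ≃ₜ X)) (A : Set X) (hA : ∀ g, ∀ x ∈ A, T g x ∈ A) (g : G) :
    T g '' A = A := by
  apply Subset.antisymm
  · rintro _ ⟨x, hx, rfl⟩
    exact hA g x hx
  · intro x hx
    exact ⟨T g⁻¹ x, hA _ _ hx, hom_apply_inv T g x⟩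

/-- The points whose orbit has at most `n` elements, in a form that is visibly closed: among any
`n + 1` group elements, two move the point to the same place. -/
def smallOrbit (T : G →* (X ≃ₜ X)) (n : ℕ) : Set X :=
  {x | ∀ g : ℕ → G, ∃ i j, i < j ∧ j ≤ n ∧ T (g i) x = T (g j) x}

lemma isClosed_smallOrbit (T : G →* (X ≃ₜ X)) (n : ℕ) : IsClosed (smallOrbit T n) := by
  have : smallOrbit T n = ⋂ g : ℕ → G, ⋃ q ∈ {q : ℕ × ℕ | q.1 < q.2 ∧ q.2 ≤ n},
      {x | T (g q.1) x = T (g q.2) x} := by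
    ext x
    simp [smallOrbit, and_assoc]
  rw [this]
  refine isClosed_iInter fun g => Set.Finite.isClosed_biUnion ?_ fun q _ =>
    isClosed_eq (T _).continuous (T _).continuous
  refine ((Set.finite_Iic n).prod (Set.finite_Iic n)).subset ?_
  rintro ⟨i, j⟩ ⟨h1, h2⟩
  simp only [mem_prod, mem_Iic]
  simp only at h1 h2
  omega

lemma smallOrbit_mem (T : G →* (X ≃ₜ X)) (n : ℕ) (g : G) (x : X) (hx : x ∈ smallOrbit T n) :
    T g x ∈ smallOrbit T n := by
  intro f
  obtain ⟨i, j, h1, h2, h3⟩ := hx fun k => f k * g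
  exact ⟨i, j, h1, h2, by simpa only [hom_mul_apply] using h3⟩

lemma smallOrbit_mono (T : G →* (X ≃ₜ X)) : Monotone (smallOrbit T) := by
  intro n m hnm x hx f
  obtain ⟨i, j, h1, h2, h3⟩ := hx f
  exact ⟨i, j, h1, h2.trans hnm, h3⟩

lemma exists_mem_smallOrbit (T : G →* (X ≃ₜ X)) (x : X)
    (hx : (range fun g : G => T g x).Finite) : ∃ n, x ∈ smallOrbit T n := by
  refine ⟨hx.toFinset.card, fun f => ?_⟩
  obtain ⟨i, hi, j, hj, hij, h⟩ := Finset.exists_ne_map_eq_of_card_lt_of_maps_to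
    (s := Finset.range (hx.toFinset.card + 1)) (t := hx.toFinset) (by simp)
    (f := fun k => T (f k) x) (fun k _ => by simp)
  simp only [Finset.mem_range] at hi hj
  rcases lt_or_gt_of_ne hij with h' | h'
  · exact ⟨i, j, h', by omega, h⟩
  · exact ⟨j, i, h', by omega, h.symm⟩

lemma notMem_smallOrbit (T : G →* (X ≃ₜ X)) (x : X)
    (hx : (range fun g : G => T g x).Infinite) (n : ℕ) : x ∉ smallOrbit T n := by
  intro h
  have hf : ∀ k, ∃ g : G, T g x = hx.natEmbedding _ k := fun k => (hx.natEmbedding _ k).2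
  choose f hf using hf
  obtain ⟨i, j, hij, -, h3⟩ := h f
  rw [hf, hf] at h3
  exact hij.ne ((hx.natEmbedding _).injective (Subtype.ext h3))

/-- By the Baire category theorem a topologically transitive action on an infinite compact metric
space has a point with dense, hence infinite, orbit. -/
lemma exists_infinite_orbit [CompactSpace X] [Infinite X] (T : G →* (X ≃ₜ X))
    (ht : ∀ U V : Set X, IsOpen U → IsOpen V → U.Nonempty → V.Nonempty →
      ∃ g : G, ((T g) '' U ∩ V).Nonempty) :
    ∃ x : X, (range fun g : G => T g x).Infinite := by
  obtain ⟨b, hbc, hbe, hb⟩ := TopologicalSpace.exists_countable_basis X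
  have := hbc.to_subtype
  have hd : Dense (⋂ V : b, ⋃ g : G, T g ⁻¹' (V : Set X)) := by
    refine dense_iInter_of_isOpen (fun V => isOpen_iUnion fun g =>
      (hb.isOpen V.2).preimage (T g).continuous) fun V => ?_
    rw [dense_iff_inter_open]
    intro U hU hUn
    obtain ⟨g, _, ⟨u, hu, rfl⟩, hv⟩ := ht U V hU (hb.isOpen V.2) hUn
      (nonempty_iff_ne_empty.2 fun h => hbe (h ▸ V.2))
    exact ⟨u, hu, mem_iUnion.2 ⟨g, hv⟩⟩
  obtain ⟨x, hx⟩ := hd.nonempty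
  refine ⟨x, fun hfin => ?_⟩
  have hdx : Dense (range fun g : G => T g x) := by
    rw [hb.dense_iff]
    intro V hV _
    obtain ⟨g, hg⟩ := mem_iUnion.1 (mem_iInter.1 hx ⟨V, hV⟩)
    exact ⟨_, hg, g, rfl⟩
  have := hdx.closure_eq
  rw [hfin.isClosed.closure_eq] at this
  exact Set.infinite_univ (this ▸ hfin)

lemma exists_out_mul (H : Subgroup G) (g : G) :
    ∃ (q : G ⧸ H) (h : H), g = q.out * h := by
  obtain ⟨h, hh⟩ := QuotientGroup.mk_out_eq_mul H g
  refine ⟨(g : G ⧸ H), h⁻¹, ?_⟩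
  rw [hh]
  simp

lemma finite_orbit_of_subgroup (T : G →* (X ≃ₜ X)) (H : Subgroup G) [H.FiniteIndex] (x : X)
    (hx : (range fun h : H => T h x).Finite) : (range fun g : G => T g x).Finite := by
  refine (Set.finite_iUnion fun q : G ⧸ H => hx.image (T q.out)).subset ?_
  rintro _ ⟨g, rfl⟩
  obtain ⟨q, h, rfl⟩ := exists_out_mul H g
  exact mem_iUnion.2 ⟨q, T h x, ⟨h, rfl⟩, (hom_mul_apply T _ _ _).symm⟩

/-- The finitely many translates of a closed infinite `H`-invariant set form a closed infinite
`G`-invariant set, that is the whole space; by Baire one of them has interior. -/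
lemma interior_nonempty_of_infinite [CompactSpace X] [Nonempty X] (T : G →* (X ≃ₜ X))
    (hmin : ∀ A : Set X, IsClosed A → (∀ g : G, T g '' A = A) → A ≠ Set.univ → A.Finite)
    (H : Subgroup G) [H.FiniteIndex] (A : Set X) (hA : IsClosed A)
    (hinv : ∀ h : H, ∀ x ∈ A, T h x ∈ A) (hinf : A.Infinite) : (interior A).Nonempty := by
  have hcl : ∀ q : G ⧸ H, IsClosed (T q.out '' A) := fun q => (T q.out).isClosedMap _ hA
  have mem : ∀ g : G, ∀ x ∈ A, T g x ∈ ⋃ q : G ⧸ H, T q.out '' A := by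
    intro g x hx
    obtain ⟨q, h, rfl⟩ := exists_out_mul H g
    exact mem_iUnion.2 ⟨q, T h x, hinv h x hx, (hom_mul_apply T _ _ _).symm⟩
  have hU : (⋃ q : G ⧸ H, T q.out '' A) = univ := by
    by_contra hne
    refine hinf ((hmin _ (isClosed_iUnion_of_finite hcl) (image_eq_of_mapsTo T _ ?_) hne).subset ?_)
    · rintro g _ hx
      obtain ⟨q, x, hxA, rfl⟩ := mem_iUnion.1 hx
      rw [← hom_mul_apply]
      exact mem _ _ hxA
    · intro x hx
      simpa only [hom_one_apply] using mem 1 x hx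
  obtain ⟨q, hq⟩ := nonempty_interior_of_iUnion_of_closed hcl hU
  rw [← Homeomorph.image_interior] at hq
  exact hq.of_image

/-! ### The profinite extension and its collapse -/

/-- The fibre of the extension: self-maps of all the finite sets `smallOrbit T n`. -/
abbrev Fibre (T : G →* (X ≃ₜ X)) : Type u := ∀ n, smallOrbit T n → smallOrbit T n

/-- The diagonal action on the extension `X × Fibre T`, by postcomposition on the fibre. -/
def extAct (T : G →* (X ≃ₜ X)) (g : G) (e : X × Fibre T) : X × Fibre T :=
  (T g e.1, fun n d => ⟨T g (e.2 n d), smallOrbit_mem T n g _ (e.2 n d).2⟩)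

lemma continuous_extAct (T : G →* (X ≃ₜ X)) (g : G) : Continuous (extAct T g) := by
  refine ((T g).continuous.comp continuous_fst).prodMk (continuous_pi fun n => continuous_pi
    fun d => Continuous.subtype_mk ((T g).continuous.comp ?_) _)
  fun_prop

lemma extAct_one (T : G →* (X ≃ₜ X)) (e : X × Fibre T) : extAct T 1 e = e := by
  refine Prod.ext (hom_one_apply T _) (funext fun n => funext fun d => Subtype.ext ?_)
  exact hom_one_apply T _

lemma extAct_mul (T : G →* (X ≃ₜ X)) (a b : G) (e : X × Fibre T) :
    extAct T (a * b) e = extAct T a (extAct T b e) := by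
  refine Prod.ext (hom_mul_apply T _ _ _) (funext fun n => funext fun d => Subtype.ext ?_)
  exact hom_mul_apply T _ _ _

/-- The map whose fibres collapse the extension over points with finite orbit. The `n`-th fibre
coordinate, coded as a real number by `c n`, is scaled by the distance to `smallOrbit T n`: over a
point with at most `N` translates, only the coordinates below `N` survive. -/
noncomputable def collapse (T : G →* (X ≃ₜ X)) (c : ∀ n, (smallOrbit T n → smallOrbit T n) → ℝ)
    (e : X × Fibre T) : X × (ℕ → ℝ) :=
  (e.1, fun n => Metric.infDist e.1 (smallOrbit T n) * c n (e.2 n))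

lemma continuous_collapse (T : G →* (X ≃ₜ X)) (c : ∀ n, (smallOrbit T n → smallOrbit T n) → ℝ)
    (hc : ∀ n, Continuous (c n)) : Continuous (collapse T c) := by
  refine continuous_fst.prodMk (continuous_pi fun n => ?_)
  refine ((Metric.continuous_infDist_pt _).comp continuous_fst).mul ((hc n).comp ?_)
  fun_prop

lemma infDist_apply_eq_zero (T : G →* (X ≃ₜ X)) (n : ℕ) (g : G) (x : X)
    (hx : Metric.infDist x (smallOrbit T n) = 0) :
    Metric.infDist (T g x) (smallOrbit T n) = 0 := by
  rcases (smallOrbit T n).eq_empty_or_nonempty with h | h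
  · rw [h, Metric.infDist_empty]
  · exact Metric.infDist_zero_of_mem (smallOrbit_mem T n g x
      (((isClosed_smallOrbit T n).mem_iff_infDist_zero h).2 hx))

lemma collapse_extAct (T : G →* (X ≃ₜ X)) (c : ∀ n, (smallOrbit T n → smallOrbit T n) → ℝ)
    (hc : ∀ n, Function.Injective (c n)) (g : G) (a b : X × Fibre T)
    (hab : collapse T c a = collapse T c b) :
    collapse T c (extAct T g a) = collapse T c (extAct T g b) := by
  obtain ⟨x, a⟩ := a
  obtain ⟨y, b⟩ := b
  simp only [collapse, Prod.mk.injEq] at hab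
  obtain ⟨rfl, hab⟩ := hab
  refine Prod.ext rfl (funext fun n => ?_)
  have h := congrFun hab n
  simp only [collapse, extAct]
  rcases eq_or_ne (Metric.infDist x (smallOrbit T n)) 0 with h0 | h0
  · rw [infDist_apply_eq_zero T n g x h0, zero_mul, zero_mul]
  · have h1 : a n = b n := hc n (mul_left_cancel₀ h0 h)
    simp only [h1]

/-- The part of the factor lying over a point with finite orbit is finite. -/
lemma finite_collapse (T : G →* (X ≃ₜ X)) (c : ∀ n, (smallOrbit T n → smallOrbit T n) → ℝ)
    (hD : ∀ n, (smallOrbit T n).Finite) (x : X) (hx : (range fun g : G => T g x).Finite) :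
    (collapse T c '' {e | e.1 = x}).Finite := by
  obtain ⟨N, hN⟩ := exists_mem_smallOrbit T x hx
  have := fun n => (hD n).to_subtype
  let F : (∀ n : Fin N, smallOrbit T n → smallOrbit T n) → X × (ℕ → ℝ) := fun k =>
    (x, fun n => if h : n < N then Metric.infDist x (smallOrbit T n) * c n (k ⟨n, h⟩) else 0)
  refine (Set.finite_range F).subset ?_
  rintro _ ⟨⟨y, k⟩, rfl, rfl⟩
  refine ⟨fun n => k n, Prod.ext rfl (funext fun n => ?_)⟩
  simp only [F, collapse]
  split_ifs with h
  · rfl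
  · rw [Metric.infDist_zero_of_mem (smallOrbit_mono T (not_lt.1 h) hN), zero_mul]

/-! ### Minimal invariant sets and the conclusion -/

/-- Among the closed invariant subsets of a compact space `M` that meet the fibre of `π` over
`x₀`, there are minimal ones below any given one. -/
lemma exists_minimal_invariant {H M : Type*} [TopologicalSpace M] [CompactSpace M]
    (π : M → X) (hπ : Continuous π) (act : H → M → M) (x₀ : X) (C : Set M) (hC : IsClosed C)
    (hCinv : ∀ h, ∀ e ∈ C, act h e ∈ C) (hCx : ∃ e ∈ C, π e = x₀) :
    ∃ E ⊆ C, IsClosed E ∧ (∀ h, ∀ e ∈ E, act h e ∈ E) ∧ (∃ e ∈ E, π e = x₀) ∧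
      ∀ E' ⊆ E, IsClosed E' → (∀ h, ∀ e ∈ E', act h e ∈ E') → (∃ e ∈ E', π e = x₀) →
        E' = E := by
  obtain ⟨E, hE⟩ := zorn_superset {E : Set M | E ⊆ C ∧ IsClosed E ∧
      (∀ h, ∀ e ∈ E, act h e ∈ E) ∧ ∃ e ∈ E, π e = x₀} (by
    intro c hc hchain
    rcases c.eq_empty_or_nonempty with rfl | hne
    · exact ⟨C, ⟨Subset.rfl, hC, hCinv, hCx⟩, by simp⟩
    obtain ⟨s₀, hs₀⟩ := hne
    refine ⟨⋂₀ c, ⟨(sInter_subset_of_mem hs₀).trans (hc hs₀).1,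
      isClosed_sInter fun s hs => (hc hs).2.1,
      fun h e he s hs => (hc hs).2.2.1 h e (he s hs), ?_⟩, fun s hs => sInter_subset_of_mem hs⟩
    have : Nonempty c := ⟨⟨s₀, hs₀⟩⟩
    have hcl : ∀ s : c, IsClosed ((s : Set M) ∩ π ⁻¹' {x₀}) := fun s =>
      (hc s.2).2.1.inter (isClosed_singleton.preimage hπ)
    obtain ⟨e, he⟩ := IsCompact.nonempty_iInter_of_directed_nonempty_isCompact_isClosed
      (fun s : c => (s : Set M) ∩ π ⁻¹' {x₀})
      (by
        intro s t
        rcases hchain.total s.2 t.2 with h | h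
        · exact ⟨s, Subset.rfl, inter_subset_inter_left _ h⟩
        · exact ⟨t, inter_subset_inter_left _ h, Subset.rfl⟩)
      (fun s => (hc s.2).2.2.2) (fun s => (hcl s).isCompact) hcl
    rw [mem_iInter] at he
    exact ⟨e, fun s hs => (he ⟨s, hs⟩).1, (he ⟨s₀, hs₀⟩).2⟩)
  refine ⟨E, hE.prop.1, hE.prop.2.1, hE.prop.2.2.1, hE.prop.2.2.2, fun E' h1 h2 h3 h4 => ?_⟩
  exact hE.eq_of_subset ⟨h1.trans hE.prop.1, h2, h3, h4⟩ h1

end Infinite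

/-- A finite-index subgroup of a group admitting a chaotic almost minimal
action on some compact metric space also admits a chaotic almost minimal action on some
compact metric space. -/
theorem statement16 {G : Type*} [Group G] {X : Type u} [MetricSpace X] [CompactSpace X]
    (T : G →* (X ≃ₜ X)) (hcam : IsCAM T)
    (H : Subgroup G) (hfin : H.FiniteIndex) :
    ∃ (Y : Type u) (_ : MetricSpace Y) (_ : CompactSpace Y) (S : H →* (Y ≃ₜ Y)),
      IsCAM S := by
  obtain ⟨hinj, htrans, hdense, hmin⟩ := hcam
  rcases finite_or_infinite X with hX | hX
  · have : Finite (X ≃ₜ X) := Finite.of_injective (fun f => (f : X → X)) DFunLike.coe_injective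
    have hinj' : Function.Injective (T.comp H.subtype) := hinj.comp Subtype.val_injective
    have : Finite H := Finite.of_injective _ hinj'
    exact exists_isCAM_of_finite _ hinj'
  obtain ⟨x₀, hx₀⟩ := exists_infinite_orbit T htrans
  have hD : ∀ n, (smallOrbit T n).Finite := fun n =>
    hmin _ (isClosed_smallOrbit T n) (image_eq_of_mapsTo T _ (smallOrbit_mem T n))
      fun h => notMem_smallOrbit T x₀ hx₀ n (h ▸ mem_univ _)
  have := fun n => (hD n).to_subtype
  have hcode : ∀ n, ∃ f : (smallOrbit T n → smallOrbit T n) → ℝ, Function.Injective f := by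
    intro n
    obtain ⟨f, hf⟩ := exists_injective_nat (smallOrbit T n → smallOrbit T n)
    exact ⟨fun k => f k, Nat.cast_injective.comp hf⟩
  choose c hc using hcode
  have hcc : ∀ n, Continuous (c n) := fun n => continuous_of_discreteTopology
  have hΦ := continuous_collapse T c hcc
  -- Surjectivity of the fibre coordinates is what makes the resulting action faithful.
  obtain ⟨E, hEC, hEcl, hEinv, ⟨e₀, he₀, he₀x⟩, hEmin⟩ := exists_minimal_invariant
    (π := (Prod.fst : X × Fibre T → X)) continuous_fst (fun h : H => extAct T h) x₀
    {e | ∀ n, Function.Surjective (e.2 n)}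
    (by
      simp only [ofPred_forall]
      refine isClosed_iInter fun n => ?_
      have : IsClosed {k : smallOrbit T n → smallOrbit T n | Function.Surjective k} :=
        isClosed_discrete _
      exact this.preimage (f := fun e : X × Fibre T => e.2 n) (by fun_prop))
    (by
      intro h e he n d
      obtain ⟨d', hd'⟩ := he n ⟨T (h : G)⁻¹ d, smallOrbit_mem T n _ _ d.2⟩
      refine ⟨d', Subtype.ext ?_⟩
      simp only [extAct, hd', hom_apply_inv])
    ⟨(x₀, fun n => id), fun n => Function.surjective_id, rfl⟩
  -- Every point of `E` lies over the closure of the `H`-orbit of `x₀`, and `E` is the closure of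
  -- the orbit of `e₀`.
  have hEorb : closure (range fun h : H => extAct T (h : G) e₀) = E := by
    refine hEmin _ (closure_minimal ?_ hEcl) isClosed_closure ?_ ⟨e₀, subset_closure ⟨1, ?_⟩, he₀x⟩
    · rintro _ ⟨h, rfl⟩
      exact hEinv h _ he₀
    · intro h e he
      refine map_mem_closure (continuous_extAct T h) he ?_
      rintro _ ⟨h', rfl⟩
      exact ⟨h * h', by simp only [Subgroup.coe_mul, extAct_mul]⟩
    · simp only [Subgroup.coe_one, extAct_one]
  have hproj : ∀ e ∈ E, e.1 ∈ closure (range fun h : H => T h x₀) := by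
    intro e he
    rw [← hEorb] at he
    refine map_mem_closure continuous_fst he ?_
    rintro _ ⟨h, rfl⟩
    exact ⟨h, by rw [← he₀x]; rfl⟩
  have hopen : ∀ E' ⊆ E, ∀ U : Set X, IsOpen U → U.Nonempty → U ⊆ Prod.fst '' E' →
      ∃ h : H, T h x₀ ∈ U := by
    rintro E' hE' U hU ⟨u, hu⟩ hUE
    obtain ⟨e, he, rfl⟩ := hUE hu
    obtain ⟨_, hz, ⟨h, rfl⟩⟩ := mem_closure_iff.1 (hproj e (hE' he)) U hU hu
    exact ⟨h, hz⟩
  have hback : ∀ E' : Set (X × Fibre T), (∀ h : H, ∀ e ∈ E', extAct T h e ∈ E') →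
      (∃ h : H, T h x₀ ∈ Prod.fst '' E') → ∃ e ∈ E', e.1 = x₀ := by
    rintro E' hinv ⟨h, e, he, hex⟩
    refine ⟨_, hinv h⁻¹ e he, ?_⟩
    simp only [extAct, hex, Subgroup.coe_inv, hom_inv_apply]
  have hint : ∀ E' : Set (X × Fibre T), IsClosed E' → (∀ h : H, ∀ e ∈ E', extAct T h e ∈ E') →
      (Prod.fst '' E').Infinite → (interior (Prod.fst '' E')).Nonempty := by
    intro E' hcl hinv hinf
    refine interior_nonempty_of_infinite T hmin H _ (hcl.isCompact.image continuous_fst).isClosed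
      ?_ hinf
    rintro h _ ⟨e, he, rfl⟩
    exact ⟨_, hinv h e he, rfl⟩
  have hdich : ∀ E' ⊆ E, IsClosed E' → (∀ h : H, ∀ e ∈ E', extAct T h e ∈ E') → E' ≠ E →
      (Prod.fst '' E').Finite := by
    intro E' hsub hcl hinv hne
    by_contra hinf
    obtain ⟨h, hh⟩ := hopen E' hsub _ isOpen_interior (hint E' hcl hinv hinf) interior_subset
    exact hne (hEmin E' hsub hcl hinv (hback E' hinv ⟨h, interior_subset hh⟩))
  have hHinf : (range fun h : H => T h x₀).Infinite := fun h =>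
    hx₀ (finite_orbit_of_subgroup T H x₀ h)
  have hEinf : (Prod.fst '' E).Infinite := by
    refine hHinf.mono ?_
    rintro _ ⟨h, rfl⟩
    exact ⟨_, hEinv h _ he₀, by rw [← he₀x]; rfl⟩
  -- Points of `E` over finite orbits are dense in `E`: their closure is invariant and, as `E`
  -- projects onto a set with interior, it reaches the fibre over `x₀`.
  have hper : closure (E ∩ {e | (range fun g : G => T g e.1).Finite}) = E := by
    have hsub : closure (E ∩ {e | (range fun g : G => T g e.1).Finite}) ⊆ E :=
      closure_minimal inter_subset_left hEcl
    have hinv : ∀ h : H, ∀ e ∈ closure (E ∩ {e | (range fun g : G => T g e.1).Finite}),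
        extAct T h e ∈ closure (E ∩ {e | (range fun g : G => T g e.1).Finite}) := by
      intro h e he
      refine map_mem_closure (continuous_extAct T h) he ?_
      rintro e ⟨h1, h2⟩
      refine ⟨hEinv h e h1, h2.subset ?_⟩
      rintro _ ⟨g, rfl⟩
      exact ⟨g * h, hom_mul_apply T _ _ _⟩
    refine hEmin _ hsub isClosed_closure hinv (hback _ hinv ?_)
    obtain ⟨h, hh⟩ := hopen E Subset.rfl _ isOpen_interior (hint E hEcl hEinv hEinf)
      interior_subset
    refine ⟨h, ?_⟩
    have h1 := hdense.open_subset_closure_inter isOpen_interior hh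
    refine closure_minimal ?_
      (isClosed_closure.isCompact.image continuous_fst).isClosed h1
    rintro y ⟨hy, hyf⟩
    obtain ⟨e, he, rfl⟩ := interior_subset hy
    exact ⟨e, subset_closure ⟨he, hyf⟩, rfl⟩
  let Z : Set (X × (ℕ → ℝ)) := collapse T c '' E
  let p : E → Z := fun e => ⟨collapse T c e, mem_image_of_mem _ e.2⟩
  let act : H → E → E := fun h e => ⟨extAct T h e, hEinv h e e.2⟩
  have : CompactSpace E := isCompact_iff_compactSpace.1 hEcl.isCompact
  have : CompactSpace Z := isCompact_iff_compactSpace.1 (hEcl.isCompact.image hΦ)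
  obtain ⟨S, hS⟩ : ∃ S : H →* (Z ≃ₜ Z), IsCAM S := by
    refine exists_isCAM_of_factor p (by fun_prop) ?_ act ?_ ?_ ?_ ?_ ?_ ⟨e₀, he₀⟩ ?_
      {e | (range fun g : G => T g e.1.1).Finite} ?_ ?_ ?_
    · rintro ⟨_, e, he, rfl⟩
      exact ⟨⟨e, he⟩, rfl⟩
    · intro h
      exact ((continuous_extAct T h).comp continuous_subtype_val).subtype_mk _
    · intro e
      exact Subtype.ext (extAct_one T _)
    · intro a b e
      exact Subtype.ext (extAct_mul T _ _ _)
    · intro h a b hab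
      exact Subtype.ext (collapse_extAct T c hc h a b (congrArg Subtype.val hab))
    · intro h hh
      have h1 : collapse T c (extAct T h e₀) = collapse T c e₀ :=
        congrArg Subtype.val (hh ⟨e₀, he₀⟩)
      have hfix : ∀ n, ∀ x ∈ smallOrbit T n, T h x = x := by
        intro n x hx
        obtain ⟨d, hd⟩ := hEC he₀ n ⟨x, hx⟩
        have h2 := congrFun (congrArg Prod.snd h1) n
        have h3 : T (h : G) e₀.1 = e₀.1 := congrArg Prod.fst h1
        have hpos : 0 < Metric.infDist e₀.1 (smallOrbit T n) := by
          rw [← (isClosed_smallOrbit T n).notMem_iff_infDist_pos ⟨x, hx⟩, he₀x]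
          exact notMem_smallOrbit T x₀ hx₀ n
        have h4 : Metric.infDist e₀.1 (smallOrbit T n) * c n ((extAct T h e₀).2 n) =
            Metric.infDist e₀.1 (smallOrbit T n) * c n (e₀.2 n) := by
          simp only [collapse] at h2
          rwa [show (extAct T (h : G) e₀).1 = e₀.1 from h3] at h2
        have h5 := congrArg Subtype.val (congrFun (hc n (mul_left_cancel₀ hpos.ne' h4)) d)
        simpa only [extAct, hd] using h5
      have h6 : T h = T 1 := by
        refine Homeomorph.ext fun x => ?_
        refine congrFun (Continuous.ext_on hdense (T h).continuous (T 1).continuous ?_) x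
        intro y hy
        obtain ⟨n, hn⟩ := exists_mem_smallOrbit T y hy
        rw [hfix n y hn, hom_one_apply]
      exact Subtype.ext (hinj h6)
    · intro e
      rw [closure_subtype]
      have : e.1 ∈ closure (range fun h : H => extAct T (h : G) e₀) := hEorb ▸ e.2
      refine closure_mono ?_ this
      rintro _ ⟨h, rfl⟩
      exact ⟨_, ⟨h, rfl⟩, rfl⟩
    · intro e
      rw [closure_subtype]
      have : e.1 ∈ closure (E ∩ {e | (range fun g : G => T g e.1).Finite}) := hper.symm ▸ e.2
      refine closure_mono ?_ this
      rintro e ⟨h1, h2⟩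
      exact ⟨⟨e, h1⟩, h2, rfl⟩
    · intro e he
      refine Finite.of_finite_image (f := Subtype.val) ?_ Subtype.val_injective.injOn
      refine (he.biUnion (t := fun x => collapse T c '' {e | e.1 = x}) ?_).subset ?_
      · rintro _ ⟨g, rfl⟩
        refine finite_collapse T c hD _ (he.subset ?_)
        rintro _ ⟨g', rfl⟩
        exact ⟨g' * g, hom_mul_apply T _ _ _⟩
      · rintro _ ⟨_, ⟨h, rfl⟩, rfl⟩
        exact mem_biUnion (mem_range_self (h : G)) ⟨extAct T h e, rfl, rfl⟩
    · intro A hA hinv hne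
      have hinv' : ∀ h : H, ∀ e ∈ Subtype.val '' A, extAct T h e ∈ Subtype.val '' A := by
        rintro h _ ⟨e, he, rfl⟩
        exact ⟨_, hinv h e he, rfl⟩
      have hf := hdich (Subtype.val '' A) (Subtype.coe_image_subset _ _)
        (hEcl.isClosedEmbedding_subtypeVal.isClosedMap _ hA) hinv' (fun h => hne (by
          refine eq_univ_of_forall fun e => ?_
          have he : e.1 ∈ Subtype.val '' A := by rw [h]; exact e.2
          obtain ⟨e1, he1, h1⟩ := he
          rwa [Subtype.ext h1] at he1))
      refine Finite.of_finite_image (f := Subtype.val) ?_ Subtype.val_injective.injOn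
      refine (hf.biUnion (t := fun x => collapse T c '' {e | e.1 = x}) ?_).subset ?_
      · rintro _ ⟨e, he, rfl⟩
        refine finite_collapse T c hD _ (finite_orbit_of_subgroup T H _ (hf.subset ?_))
        rintro _ ⟨h, rfl⟩
        exact ⟨_, hinv' h e he, rfl⟩
      · rintro _ ⟨_, ⟨e, he, rfl⟩, rfl⟩
        exact mem_biUnion (mem_image_of_mem _ (mem_image_of_mem _ he)) ⟨e, rfl, rfl⟩
  let := TopologicalSpace.metrizableSpaceMetric Z
  exact ⟨Z, inferInstance, inferInstance, S, hS⟩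
end

section
/- Let (X,T) be a chaotic almost minimal topological G-system and let H be a finite-index normal subgroup of G such that the restricted H-action on X is faithful and some point x ∈ X has dense H-orbit. Then the action of H on X is chaotic almost minimal. -/
/-!
Faithfulness is assumed, a dense orbit gives transitivity, and finite `G`-orbits contain the
corresponding `H`-orbits. For almost minimality, let `A` be closed, `H`-invariant and proper.
Since `H` has finite index, the union `B` of the translates `T g '' A` is a finite union of closed
sets, so it is closed, and it is `G`-invariant. If `B ≠ X`, then `B` is finite, hence so is `A`.
If `B = X`, a point with dense `H`-orbit lies in some translate `T g '' A`; by normality this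
translate is closed and `H`-invariant, so it is all of `X`, forcing `A = X`.
-/

open Set MeasureTheory

/-- If `(X,T)` is a CAM `G`-system and `H` is a finite-index normal
subgroup of `G` acting faithfully with some point having dense `H`-orbit, then the
`H`-action on `X` is chaotic almost minimal. -/
theorem statement17 {G X : Type*} [Group G] [MetricSpace X] [CompactSpace X]
    (T : G →* (X ≃ₜ X)) (hcam : IsCAM T)
    (H : Subgroup G) (hnorm : H.Normal) (hfin : H.FiniteIndex)
    (hfaith : Function.Injective (T.comp H.subtype))
    (hdense : ∃ x : X, Dense (Set.range fun h : H => T (h : G) x)) :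
    IsCAM (T.comp H.subtype) := by
  obtain ⟨-, -, hper, hmin⟩ := hcam
  obtain ⟨x, hx⟩ := hdense
  have hmul : ∀ (a b : G) (y : X), T (a * b) y = T a (T b y) := fun a b y => by
    rw [map_mul]; rfl
  refine ⟨hfaith, ?_, ?_, ?_⟩
  · intro U V hU hV hUn hVn
    obtain ⟨_, hu, ⟨h₁, rfl⟩⟩ := hx.inter_open_nonempty U hU hUn
    obtain ⟨_, hv, ⟨h₂, rfl⟩⟩ := hx.inter_open_nonempty V hV hVn
    refine ⟨h₂ * h₁⁻¹, _, ⟨_, hu, rfl⟩, ?_⟩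
    have key : T ((h₂ : G) * (h₁ : G)⁻¹) (T h₁ x) = T h₂ x := by
      rw [← hmul, inv_mul_cancel_right]
    change T ((h₂ : G) * (h₁ : G)⁻¹) (T h₁ x) ∈ V
    rw [key]
    exact hv
  · refine hper.mono fun y hy => Set.Finite.subset hy ?_
    rintro _ ⟨h, rfl⟩
    exact ⟨h, rfl⟩
  · intro A hA hinv hne
    have hinvA : ∀ h ∈ H, ∀ a ∈ A, T h a ∈ A := fun h hh a ha => by
      have hi : T h '' A = A := hinv ⟨h, hh⟩
      rw [← hi]
      exact ⟨a, ha, rfl⟩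
    -- The translate by `g` depends only on the coset `g H`, so representatives suffice.
    let B : Set X := ⋃ q : G ⧸ H, T q.out '' A
    have hB : ∀ y, y ∈ B ↔ ∃ g : G, ∃ a ∈ A, T g a = y := by
      intro y
      constructor
      · intro hy
        obtain ⟨q, a, ha, rfl⟩ := Set.mem_iUnion.1 hy
        exact ⟨q.out, a, ha, rfl⟩
      · rintro ⟨g, a, ha, rfl⟩
        have hg : ((g : G ⧸ H).out)⁻¹ * g ∈ H :=
          QuotientGroup.eq.1 (Quotient.out_eq' (g : G ⧸ H))
        refine Set.mem_iUnion.2 ⟨(g : G ⧸ H), _, hinvA _ hg a ha, ?_⟩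
        rw [← hmul, mul_inv_cancel_left]
    have hBc : IsClosed B :=
      isClosed_iUnion_of_finite fun q => (T q.out).isClosedMap A hA
    have hBinv : ∀ g : G, T g '' B = B := by
      intro g
      ext y
      constructor
      · rintro ⟨z, hz, rfl⟩
        obtain ⟨k, a, ha, rfl⟩ := (hB z).1 hz
        exact (hB _).2 ⟨g * k, a, ha, hmul g k a⟩
      · intro hy
        obtain ⟨k, a, ha, rfl⟩ := (hB y).1 hy
        refine ⟨T (g⁻¹ * k) a, (hB _).2 ⟨_, a, ha, rfl⟩, ?_⟩
        rw [← hmul, mul_inv_cancel_left]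
    have hBne : B ≠ Set.univ := by
      intro hBu
      obtain ⟨g, a, ha, hga⟩ := (hB x).1 (hBu ▸ Set.mem_univ x)
      have hsub : (Set.range fun h : H => T (h : G) x) ⊆ T g '' A := by
        rintro _ ⟨h, rfl⟩
        have hc : g⁻¹ * (h : G) * g ∈ H := by
          simpa using hnorm.conj_mem h h.2 g⁻¹
        refine ⟨_, hinvA _ hc a ha, ?_⟩
        rw [← hmul, ← hga]
        change _ = T h (T g a)
        rw [← hmul]
        congr 2
        group
      have hall : T g '' A = Set.univ :=
        Set.eq_univ_of_univ_subset
          (hx.closure_eq ▸ closure_minimal hsub ((T g).isClosedMap A hA))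
      refine hne (Set.eq_univ_of_forall fun y => ?_)
      obtain ⟨b, hb, hby⟩ := hall.symm ▸ Set.mem_univ (T g y)
      exact (T g).injective hby ▸ hb
    refine (hmin B hBc hBinv hBne).subset fun a ha => (hB a).2 ⟨1, a, ha, ?_⟩
    rw [map_one]
    rfl
end

section
/- Let G be a group acting by homeomorphisms on a compact metric space X, with the action faithful, and let H be a subgroup of G of finite index such that the restricted action of H on X is chaotic almost minimal. Then the action of G on X is chaotic almost minimal. -/
/-!
Transitivity and finiteness of proper closed invariant sets pass from `H` to `G` at once, because
elements of `H` are elements of `G` and `G`-invariant sets are `H`-invariant. For density of the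
points with finite orbit, `G` is a finite union of left cosets `gᵢ H`, so the `G`-orbit of `x` is
the finite union of the images under `T gᵢ` of its `H`-orbit.
-/

open Set MeasureTheory

theorem finite_orbit_of_finiteIndex {G X : Type*} [Group G] [TopologicalSpace X]
    (T : G →* (X ≃ₜ X)) (H : Subgroup G) [H.FiniteIndex] (x : X)
    (hx : (Set.range fun h : H => T h x).Finite) :
    (Set.range fun g : G => T g x).Finite := by
  have : Finite (G ⧸ H) := H.finite_quotient_of_finiteIndex
  refine (Set.finite_iUnion fun q : G ⧸ H => hx.image (T q.out)).subset ?_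
  rintro _ ⟨g, rfl⟩
  obtain ⟨h, hh⟩ := QuotientGroup.mk_out_eq_mul H g
  refine Set.mem_iUnion.2 ⟨(g : G ⧸ H), T (h⁻¹ : H) x, ⟨h⁻¹, rfl⟩, ?_⟩
  have hg : g = (g : G ⧸ H).out * (h⁻¹ : H) := by simp [hh]
  change (T (g : G ⧸ H).out * T (h⁻¹ : H)) x = T g x
  rw [← map_mul, ← hg]

/-- If a group `G` acts faithfully by homeomorphisms on a compact metric
space `X` and a finite-index subgroup `H` of `G` acts chaotic almost minimally on `X`,
then the `G`-action on `X` is chaotic almost minimal. -/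
theorem statement18 {G X : Type*} [Group G] [MetricSpace X] [CompactSpace X]
    (T : G →* (X ≃ₜ X)) (hfaith : Function.Injective T)
    (H : Subgroup G) (hfin : H.FiniteIndex)
    (hcamH : IsCAM (T.comp H.subtype)) :
    IsCAM T := by
  obtain ⟨-, htrans, hdense, hmin⟩ := hcamH
  refine ⟨hfaith, fun U V hU hV hU' hV' => ?_,
    hdense.mono fun x hx => finite_orbit_of_finiteIndex T H x hx,
    fun A hA hinv hne => hmin A hA (fun h => hinv h) hne⟩
  obtain ⟨h, hh⟩ := htrans U V hU hV hU' hV'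
  exact ⟨h, hh⟩
end

section
/- Let (X,σ) be an infinite topologically mixing shift of finite type over a finite alphabet, let Aut(X,σ) be the group of all homeomorphisms of X commuting with σ, and let H be a subgroup of Aut(X,σ) of finite index. Then the natural action of H on X is chaotic almost minimal. -/
/-!
Faithfulness is immediate. Some power `σX ^ m`, `m > 0`, lies in `H`, so mixing gives transitivity.
Periodic points are dense in a mixing shift of finite type (`exists_periodic`), and the finitely
many points of a given period are permuted by `H`, so points with finite orbit are dense.

For the last property let `Y` be a closed `H`-invariant proper subset that is infinite. By
transitivity `Y` has empty interior, hence so has the union of its translates `σX ^ i '' Y`,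
`i < m`; consequently some block `g` of `X` occurs in no point of `Y`. Let `p` be a prime exceeding
the index of `H`: every automorphism `φ` with `φ ^ p = 1` has a power `φ ^ k ∈ H` with
`0 < k < p`, so `φ ∈ H` (`mem_of_pow_eq_one`). It therefore suffices to find an automorphism of
order `p` that creates the block `g` in some point `y` of `Y` (`exists_marker`).

Since `Y` is infinite, it has a point `y` without small periods, and a Fine and Wilf type argument
(`exists_window_without_short_period`) finds a long window of `y` with no period up to half its
length plus a constant. Changing only a bounded central part of this window, gluing produces
`p - 1` variants containing `g`, with the leftmost occurrence of `g` at a common position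
(`exists_alternatives`). The absence of periods, together with the absence of `g` from `y`, prevents
the `p` resulting blocks from overlapping one another's central parts. Permuting them cyclically
wherever they occur is thus a well-defined automorphism of order `p` (`Marker`, `rot`), and it
creates `g` in `y`.
-/

open Set MeasureTheory

/-- The word `w` occurs as a block somewhere in the bi-infinite sequence `x`. -/
def occursIn {A : Type*} (w : List A) (x : ℤ → A) : Prop :=
  ∃ k : ℤ, ∀ i : Fin w.length, x (k + (i.val : ℤ)) = w.get i

/-! ### Windows without short periods -/

/-- The sequence `y` has period `t` on the interval `[i, j]`. -/
def PerOn {A : Type*} (y : ℤ → A) (t i j : ℤ) : Prop :=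
  ∀ k, i ≤ k → k + t ≤ j → y k = y (k + t)

/-- A run of period `t` in a sequence that is not globally `t`-periodic extends to a run that is
broken at its right end or at its left end. -/
lemma exists_maximal_run {A : Type*} (y : ℤ → A) (t a b : ℤ) (h : PerOn y t a b)
    (hy : ∃ k, y k ≠ y (k + t)) :
    ∃ i j, i ≤ a ∧ b ≤ j ∧ PerOn y t i j ∧
      (y (j + 1) ≠ y (j + 1 - t) ∨ y (i - 1) ≠ y (i - 1 + t)) := by
  by_cases hr : ∃ k, a ≤ k ∧ y k ≠ y (k + t)
  · obtain ⟨k, ⟨hk1, hk2⟩, hmin⟩ := Int.exists_least_of_bdd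
      (P := fun k => a ≤ k ∧ y k ≠ y (k + t)) ⟨a, fun z hz => hz.1⟩ hr
    refine ⟨a, k + t - 1, le_rfl, ?_, ?_, Or.inl ?_⟩
    · by_contra hlt
      exact hk2 (h k hk1 (by omega))
    · intro m hm1 hm2
      by_contra hne
      have := hmin m ⟨hm1, hne⟩
      omega
    · have e1 : k + t - 1 + 1 = k + t := by ring
      have e2 : k + t - t = k := by ring
      rw [e1, e2]
      exact hk2.symm
  · push Not at hr
    obtain ⟨k, hk2, hmax⟩ := Int.exists_greatest_of_bdd
      (P := fun k => y k ≠ y (k + t)) ⟨a, fun z hz => by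
        by_contra hlt
        exact hz (hr z (by omega))⟩ hy
    have hka : k < a := by
      by_contra hlt
      exact hk2 (hr k (by omega))
    refine ⟨k + 1, b, by omega, le_rfl, ?_, Or.inr ?_⟩
    · intro m hm1 hm2
      by_contra hne
      have := hmax m hne
      omega
    · simpa using hk2

/-- If every long window has a period of at most about half its length (`hbad`), then a long run of
period `p` extends to a window carrying a second period `p'`. Since the run is broken one step
further, `p + p'` exceeds the length of the window: otherwise a shift by `p'`, then `p`, then `p'`
would carry the period `p` across the break. -/
lemma second_period {A : Type*} (y : ℤ → A) (N C p a b : ℤ)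
    (hbad : ∀ i j, N ≤ j - i → ∃ t, 1 ≤ t ∧ 2 * t ≤ (j - i) + 2 * C ∧ PerOn y t i j)
    (hp : 1 ≤ p) (hpab : p ≤ b - a) (hab : N ≤ b - a) (hper : PerOn y p a b)
    (hy : ∃ k, y k ≠ y (k + p)) :
    ∃ p' i j, b - a ≤ j - i ∧ 1 ≤ p' ∧ 2 * p' ≤ (j - i) + 1 + 2 * C ∧
      (j - i) + 2 ≤ p + p' ∧ p' ≠ p ∧ PerOn y p i j ∧ PerOn y p' i j := by
  obtain ⟨i, j, hi, hj, hpij, hmis⟩ := exists_maximal_run y p a b hper hy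
  rcases hmis with hmis | hmis
  · obtain ⟨p', h1, h2, h3⟩ := hbad i (j + 1) (by omega)
    refine ⟨p', i, j, by omega, h1, by omega, ?_, ?_, hpij, fun k hk hk' => h3 k hk (by omega)⟩
    · by_contra hlt
      have e1 := h3 (j + 1 - p') (by omega) (by omega)
      have e2 := hpij (j + 1 - p' - p) (by omega) (by omega)
      have e3 := h3 (j + 1 - p' - p) (by omega) (by omega)
      rw [show j + 1 - p' + p' = j + 1 by ring] at e1
      rw [show j + 1 - p' - p + p = j + 1 - p' by ring] at e2
      rw [show j + 1 - p' - p + p' = j + 1 - p by ring] at e3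
      exact hmis (by rw [← e1, ← e2, e3])
    · rintro rfl
      have e1 := h3 (j + 1 - p') (by omega) (by omega)
      rw [show j + 1 - p' + p' = j + 1 by ring] at e1
      exact hmis e1.symm
  · obtain ⟨p', h1, h2, h3⟩ := hbad (i - 1) j (by omega)
    refine ⟨p', i, j, by omega, h1, by omega, ?_, ?_, hpij, fun k hk hk' => h3 k (by omega) hk'⟩
    · by_contra hlt
      have e1 := h3 (i - 1) (by omega) (by omega)
      have e2 := hpij (i - 1 + p') (by omega) (by omega)
      have e3 := h3 (i - 1 + p) (by omega) (by omega)
      rw [show i - 1 + p + p' = i - 1 + p' + p by ring] at e3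
      exact hmis (by rw [e1, e2, ← e3])
    · rintro rfl
      exact hmis (h3 (i - 1) (by omega) (by omega))

/-- A sequence without small global periods contains a long window having no period up to half its
length plus a prescribed constant `C`. If not, `second_period` produces a long run of bounded
period `d ≤ 2 * C`, and a second application, to that run, gives incompatible inequalities. -/
lemma exists_window_without_short_period {A : Type*} (N C : ℤ) (hC : 0 ≤ C) :
    ∃ P : ℤ, ∀ y : ℤ → A, (∀ t, 1 ≤ t → t ≤ P → ∃ k, y k ≠ y (k + t)) →
      ∃ i j, N ≤ j - i ∧ ∀ t, 1 ≤ t → 2 * t ≤ (j - i) + 2 * C → ¬ PerOn y t i j := by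
  obtain ⟨N', hN'⟩ : ∃ N' : ℤ, N' = max N (10 * C + 10) := ⟨_, rfl⟩
  have hN1 : N ≤ N' := hN' ▸ le_max_left _ _
  have hN2 : 10 * C + 10 ≤ N' := hN' ▸ le_max_right _ _
  refine ⟨10 * N', fun y hy => ?_⟩
  by_contra hcon
  push Not at hcon
  have hbad : ∀ i j, N' ≤ j - i →
      ∃ t, 1 ≤ t ∧ 2 * t ≤ (j - i) + 2 * C ∧ PerOn y t i j :=
    fun i j hij => hcon i j (by omega)
  obtain ⟨p, hp1, hp2, hp3⟩ := hbad 0 (4 * N') (by omega)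
  obtain ⟨p', i, j, hij, hq1, hq2, hsum, hne, hpij, hqij⟩ :=
    second_period y N' C p 0 (4 * N') hbad hp1 (by omega) (by omega) hp3
      (hy p hp1 (by omega))
  -- `p` and `p'` are both about half the length of `[i, j]`; their difference is
  -- therefore at most `2 * C`, and it is a period of about half of the window.
  obtain ⟨d, b, hd1, hd2, hb, hd⟩ : ∃ d b, 1 ≤ d ∧ d ≤ 2 * C ∧ N' ≤ b - i ∧ PerOn y d i b := by
    rcases lt_or_gt_of_ne hne with hlt | hlt
    · refine ⟨p - p', j - p', by omega, by omega, by omega, fun k hk hk' => ?_⟩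
      have e1 := hpij k hk (by omega)
      have e2 := hqij (k + (p - p')) (by omega) (by omega)
      rw [e1, e2]
      congr 1
      ring
    · refine ⟨p' - p, j - p, by omega, by omega, by omega, fun k hk hk' => ?_⟩
      have e1 := hqij k hk (by omega)
      have e2 := hpij (k + (p' - p)) (by omega) (by omega)
      rw [e1, e2]
      congr 1
      ring
  obtain ⟨q, i', j', h1, h2, h3, h4, -⟩ :=
    second_period y N' C d i b hbad hd1 (by omega) (by omega) hd (hy d hd1 (by omega))
  omega

/-! ### Marker automorphisms -/

/-- Membership in `X` is decided by the blocks of length `r`: a sequence all of whose windows of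
length `r` occur at the same place in some point of `X` belongs to `X`. -/
def Local {A : Type*} (X : Set (ℤ → A)) (r : ℕ) : Prop :=
  ∀ x : ℤ → A, (∀ k : ℤ, ∃ y ∈ X, ∀ j, k ≤ j → j < k + r → x j = y j) → x ∈ X

/-- The central block `xs i [-K, K]` occurs in `x` centred at position `k`. -/
def OccAt {A ι : Type*} (xs : ι → ℤ → A) (K : ℤ) (i : ι) (x : ℤ → A) (k : ℤ) : Prop :=
  ∀ j, -K ≤ j → j ≤ K → x (k + j) = xs i j

/-- A family of `p` points of `X` that agree outside `[-c, c]` and whose central blocks on `[-K, K]`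
overlap so little (`sep`) that the part `[-c, c]` of one occurrence never meets another
occurrence. The margin `K - c` is at least the block length `r` deciding membership in `X`. -/
structure Marker {A : Type*} {p : ℕ} (X : Set (ℤ → A)) (r : ℕ) (xs : ZMod p → ℤ → A) (K c : ℤ) :
    Prop where
  mem : ∀ i, xs i ∈ X
  inj : Function.Injective xs
  c_nonneg : 0 ≤ c
  le_K : c + r ≤ K
  agree : ∀ i j k, (k < -c ∨ c < k) → xs i k = xs j k
  sep : ∀ x i j k k', OccAt xs K i x k → OccAt xs K j x k' → k < k' → K + c < k' - k

open Classical in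
/-- Replaces simultaneously every occurrence of a block `xs i [-K, K]` by `xs (i + s) [-K, K]`. For
a `Marker` family at most one occurrence affects each coordinate, so the choice is immaterial. -/
noncomputable def rot {A : Type*} {p : ℕ} (xs : ZMod p → ℤ → A) (K c : ℤ) (s : ZMod p)
    (x : ℤ → A) : ℤ → A := fun n =>
  if h : ∃ q : ℤ × ZMod p, OccAt xs K q.2 x q.1 ∧ -c ≤ n - q.1 ∧ n - q.1 ≤ c then
    xs (h.choose.2 + s) (n - h.choose.1)
  else x n

namespace Marker
variable {A : Type*} {p : ℕ} {X : Set (ℤ → A)} {r : ℕ} {xs : ZMod p → ℤ → A} {K c : ℤ}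

lemma occ_unique (m : Marker X r xs K c) {x : ℤ → A} {k : ℤ} {i j : ZMod p}
    (hi : OccAt xs K i x k) (hj : OccAt xs K j x k) : i = j := by
  apply m.inj
  funext n
  by_cases hn : -K ≤ n ∧ n ≤ K
  · rw [← hi n hn.1 hn.2, ← hj n hn.1 hn.2]
  · have := m.le_K
    exact m.agree i j n (by omega)

lemma sep' (m : Marker X r xs K c) {x : ℤ → A} {k k' : ℤ} {i j : ZMod p}
    (hi : OccAt xs K i x k) (hj : OccAt xs K j x k') (h1 : k' - k ≤ K + c) (h2 : k - k' ≤ K + c) :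
    k = k' := by
  rcases lt_trichotomy k k' with h | h | h
  · have := m.sep x i j k k' hi hj h
    omega
  · exact h
  · have := m.sep x j i k' k hj hi h
    omega

lemma rot_near (m : Marker X r xs K c) {x : ℤ → A} {k : ℤ} {i : ZMod p} (s : ZMod p)
    (hi : OccAt xs K i x k) (n : ℤ) (h1 : -c ≤ n - k) (h2 : n - k ≤ c) :
    rot xs K c s x n = xs (i + s) (n - k) := by
  have h : ∃ q : ℤ × ZMod p, OccAt xs K q.2 x q.1 ∧ -c ≤ n - q.1 ∧ n - q.1 ≤ c :=
    ⟨(k, i), hi, h1, h2⟩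
  have hs := h.choose_spec
  have hk : h.choose.1 = k := m.sep' hs.1 hi
    (by have := m.le_K; omega) (by have := m.le_K; omega)
  have hi' : h.choose.2 = i := m.occ_unique (hk ▸ hs.1) hi
  unfold rot
  rw [dif_pos h, hk, hi']

lemma rot_far {x : ℤ → A} (s : ZMod p) (n : ℤ)
    (h : ∀ k i, OccAt xs K i x k → ¬ (-c ≤ n - k ∧ n - k ≤ c)) :
    rot xs K c s x n = x n := by
  unfold rot
  rw [dif_neg]
  rintro ⟨q, hq, hq'⟩
  exact h _ _ hq hq'

lemma occ_rot (m : Marker X r xs K c) {x : ℤ → A} {k : ℤ} {i : ZMod p} (s : ZMod p)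
    (hi : OccAt xs K i x k) : OccAt xs K (i + s) (rot xs K c s x) k := by
  intro j h1 h2
  by_cases hj : -c ≤ j ∧ j ≤ c
  · rw [m.rot_near s hi _ (by omega) (by omega)]
    congr 1
    ring
  · rw [rot_far, hi j h1 h2]
    · exact m.agree _ _ _ (by omega)
    · intro k' i' hi' hc
      have := m.sep' hi hi' (by omega) (by omega)
      omega

/-- Replacement creates no occurrences at new positions. -/
lemma occ_of_occ_rot (m : Marker X r xs K c) {x : ℤ → A} {k : ℤ} {i : ZMod p} (s : ZMod p)
    (hi : OccAt xs K i (rot xs K c s x) k) : ∃ i', OccAt xs K i' x k := by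
  by_contra hcon
  push Not at hcon
  apply hcon i
  intro j h1 h2
  rw [← hi j h1 h2, rot_far]
  intro k' i' hi' hc
  have := m.sep' hi (m.occ_rot s hi') (by omega) (by omega)
  subst this
  exact hcon _ hi'

lemma rot_rot (m : Marker X r xs K c) (s t : ZMod p) (x : ℤ → A) :
    rot xs K c t (rot xs K c s x) = rot xs K c (s + t) x := by
  funext n
  by_cases h : ∃ k i, OccAt xs K i x k ∧ -c ≤ n - k ∧ n - k ≤ c
  · obtain ⟨k, i, hi, h1, h2⟩ := h
    rw [m.rot_near _ hi n h1 h2, m.rot_near t (m.occ_rot s hi) n h1 h2, add_assoc]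
  · push Not at h
    rw [rot_far, rot_far, rot_far]
    · exact fun k i hi hc => absurd hc.2 (not_le.2 (h k i hi hc.1))
    · exact fun k i hi hc => absurd hc.2 (not_le.2 (h k i hi hc.1))
    · intro k i hi hc
      obtain ⟨i', hi'⟩ := m.occ_of_occ_rot s hi
      exact absurd hc.2 (not_le.2 (h k i' hi' hc.1))

lemma rot_zero (m : Marker X r xs K c) (x : ℤ → A) : rot xs K c 0 x = x := by
  funext n
  by_cases h : ∃ k i, OccAt xs K i x k ∧ -c ≤ n - k ∧ n - k ≤ c
  · obtain ⟨k, i, hi, h1, h2⟩ := h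
    have := m.le_K
    rw [m.rot_near _ hi n h1 h2, add_zero, ← hi (n - k) (by omega) (by omega)]
    congr 1
    ring
  · push Not at h
    exact rot_far _ _ (fun k i hi hc => absurd hc.2 (not_le.2 (h k i hi hc.1)))

lemma rot_shift (m : Marker X r xs K c) (s : ZMod p) (x : ℤ → A) (t : ℤ) :
    rot xs K c s (fun n => x (n + t)) = fun n => rot xs K c s x (n + t) := by
  have key : ∀ i k, OccAt xs K i (fun n => x (n + t)) k ↔ OccAt xs K i x (k + t) := by
    intro i k
    unfold OccAt
    simp only [add_right_comm]
  funext n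
  by_cases h : ∃ k i, OccAt xs K i x k ∧ -c ≤ n + t - k ∧ n + t - k ≤ c
  · obtain ⟨k, i, hi, h1, h2⟩ := h
    rw [m.rot_near s hi _ h1 h2,
      m.rot_near (k := k - t) (i := i) s ((key _ _).2 (by simpa using hi)) n (by omega) (by omega)]
    congr 1
    ring
  · push Not at h
    rw [rot_far, rot_far]
    · exact fun k i hi hc => absurd hc.2 (not_le.2 (h k i hi hc.1))
    · intro k i hi hc
      have := h _ i ((key _ _).1 hi) (by omega)
      omega

lemma rot_mem (m : Marker X r xs K c) (hX : Local X r)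
    (hsh : ∀ x ∈ X, ∀ t : ℤ, (fun n => x (n + t)) ∈ X) (s : ZMod p) {x : ℤ → A} (hx : x ∈ X) :
    rot xs K c s x ∈ X := by
  apply hX
  intro a
  by_cases h : ∃ n, a ≤ n ∧ n < a + r ∧ ∃ k i, OccAt xs K i x k ∧ -c ≤ n - k ∧ n - k ≤ c
  · obtain ⟨n, hn1, hn2, k, i, hi, h1, h2⟩ := h
    refine ⟨_, hsh _ (m.mem (i + s)) (-k), fun j hj1 hj2 => ?_⟩
    have := m.le_K
    have e := m.occ_rot s hi (j + -k) (by omega) (by omega)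
    rw [← e]
    congr 1
    ring
  · refine ⟨x, hx, fun j hj1 hj2 => ?_⟩
    exact rot_far _ _ (fun k i hi hc => h ⟨j, hj1, hj2, k, i, hi, hc⟩)

/-- The replacement map is a block code: its value at `n` depends on `[n - c - K, n + c + K]`. -/
lemma rot_congr (m : Marker X r xs K c) (s : ZMod p) {x x' : ℤ → A} (n : ℤ)
    (h : ∀ j, n - c - K ≤ j → j ≤ n + c + K → x' j = x j) :
    rot xs K c s x' n = rot xs K c s x n := by
  have key : ∀ k i, -c ≤ n - k → n - k ≤ c → (OccAt xs K i x' k ↔ OccAt xs K i x k) := by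
    intro k i h1 h2
    unfold OccAt
    refine forall_congr' fun j => forall_congr' fun hj1 => forall_congr' fun hj2 => ?_
    rw [h (k + j) (by omega) (by omega)]
  by_cases hn : ∃ k i, OccAt xs K i x k ∧ -c ≤ n - k ∧ n - k ≤ c
  · obtain ⟨k, i, hi, h1, h2⟩ := hn
    rw [m.rot_near s hi n h1 h2, m.rot_near s ((key k i h1 h2).2 hi) n h1 h2]
  · push Not at hn
    rw [rot_far, rot_far]
    · have := m.c_nonneg
      have := m.le_K
      exact h n (by omega) (by omega)
    · exact fun k i hi hc => absurd hc.2 (not_le.2 (hn k i hi hc.1))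
    · exact fun k i hi hc => absurd hc.2 (not_le.2 (hn k i ((key k i hc.1 hc.2).1 hi) hc.1))

lemma continuous_rot [TopologicalSpace A] [DiscreteTopology A] (m : Marker X r xs K c)
    (s : ZMod p) : Continuous (rot xs K c s) := by
  refine continuous_pi fun n => (IsLocallyConstant.iff_exists_open _).2 (fun x => ?_) |>.continuous
  refine ⟨(Set.Icc (n - c - K) (n + c + K)).pi fun j => {x j},
    isOpen_set_pi (Set.finite_Icc _ _) (fun _ _ => isOpen_discrete _), by simp, ?_⟩
  intro x' hx'
  exact m.rot_congr s n fun j h1 h2 => by simpa using hx' j ⟨h1, h2⟩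

end Marker

/-! ### Gluing in mixing shifts of finite type -/

/-- Any left half and any right half of points of `X` can be joined across any gap of length at
least `M`. -/
def Gap {A : Type*} (X : Set (ℤ → A)) (M : ℤ) : Prop :=
  ∀ a ∈ X, ∀ b ∈ X, ∀ i j : ℤ, i + M ≤ j →
    ∃ x ∈ X, (∀ k, k < i → x k = a k) ∧ (∀ k, j ≤ k → x k = b k)

lemma splice_mem {A : Type*} {X : Set (ℤ → A)} {r : ℕ} (hX : Local X r) {a b : ℤ → A}
    (ha : a ∈ X) (hb : b ∈ X) (k : ℤ) (h : ∀ j, k ≤ j → j < k + r → a j = b j) :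
    (fun n => if n < k then a n else b n) ∈ X := by
  apply hX
  intro i
  by_cases hi : i < k
  · refine ⟨a, ha, fun j h1 h2 => ?_⟩
    by_cases hj : j < k
    · simp [hj]
    · simp [hj, h j (by omega) (by omega)]
  · refine ⟨b, hb, fun j h1 h2 => ?_⟩
    have hj : ¬ j < k := by omega
    simp [hj]

/-- Mixing gives a joining length for each pair of blocks; as there are finitely many blocks, one
length `M` serves for all. -/
lemma exists_gap {A : Type*} [Finite A] {X : Set (ℤ → A)} {r : ℕ} (hX : Local X r)
    (hsh : ∀ x ∈ X, ∀ t : ℤ, (fun n => x (n + t)) ∈ X)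
    (hmix : ∀ a ∈ X, ∀ b ∈ X, ∃ N : ℕ, ∀ n : ℕ, N ≤ n → ∃ x ∈ X,
      (∀ k, -(r : ℤ) ≤ k → k < r → x k = a k) ∧ (∀ k, -(r : ℤ) ≤ k → k < r → x (k + n) = b k)) :
    ∃ M : ℤ, 0 ≤ M ∧ Gap X M := by
  classical
  have h1 : ∀ αβ : (Set.Ico (-(r : ℤ)) r → A) × (Set.Ico (-(r : ℤ)) r → A), ∃ N : ℕ,
      ∀ a ∈ X, ∀ b ∈ X, (∀ k, a k.1 = αβ.1 k) → (∀ k, b k.1 = αβ.2 k) → ∀ n : ℕ, N ≤ n → ∃ x ∈ X,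
      (∀ k, -(r : ℤ) ≤ k → k < r → x k = a k) ∧
        (∀ k, -(r : ℤ) ≤ k → k < r → x (k + n) = b k) := by
    intro αβ
    by_cases h : ∃ a ∈ X, ∃ b ∈ X, (∀ k, a k.1 = αβ.1 k) ∧ (∀ k, b k.1 = αβ.2 k)
    · obtain ⟨a, ha, b, hb, ha', hb'⟩ := h
      obtain ⟨N, hN⟩ := hmix a ha b hb
      refine ⟨N, fun a₂ _ b₂ _ ha₂ hb₂ n hn => ?_⟩
      obtain ⟨x, hx, hx1, hx2⟩ := hN n hn
      refine ⟨x, hx, fun k k1 k2 => ?_, fun k k1 k2 => ?_⟩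
      · rw [hx1 k k1 k2, ha' ⟨k, k1, k2⟩, ha₂ ⟨k, k1, k2⟩]
      · rw [hx2 k k1 k2, hb' ⟨k, k1, k2⟩, hb₂ ⟨k, k1, k2⟩]
    · exact ⟨0, fun a ha b hb h1 h2 => absurd ⟨a, ha, b, hb, h1, h2⟩ h⟩
  choose N hN using h1
  obtain ⟨M, hM⟩ := Finite.exists_le N
  refine ⟨M + r, by positivity, fun a ha b hb i j hij => ?_⟩
  obtain ⟨n, hn⟩ : ∃ n : ℕ, (n : ℤ) = j - i := ⟨(j - i).toNat, by omega⟩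
  obtain ⟨x, hx, hx1, hx2⟩ := hN (fun k => a (k.1 + i), fun k => b (k.1 + j)) _ (hsh a ha i) _
    (hsh b hb j) (fun _ => rfl) (fun _ => rfl) n ((hM _).trans (by omega))
  have hx' := hsh x hx (-i)
  have s1 := splice_mem hX ha hx' i (fun k k1 k2 => by
    have := hx1 (k + -i) (by omega) (by omega)
    simpa using this.symm)
  have s2 := splice_mem hX s1 hb j (fun k k1 k2 => by
    have hk : ¬ k < i := by omega
    have := hx2 (k - j) (by omega) (by omega)
    simp only [hk, if_false]
    rw [show k - j + (n : ℤ) = k + -i by omega] at this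
    simpa using this)
  refine ⟨_, s2, fun k hk => ?_, fun k hk => ?_⟩
  · simp [hk, show k < j by omega]
  · simp [not_lt.2 hk]

lemma exists_periodic {A : Type*} {X : Set (ℤ → A)} {r : ℕ} {M : ℤ} (hX : Local X r)
    (hsh : ∀ x ∈ X, ∀ t : ℤ, (fun n => x (n + t)) ∈ X) (hM : 0 ≤ M) (hgap : Gap X M)
    {x : ℤ → A} (hx : x ∈ X) (n : ℕ) :
    ∃ y ∈ X, (∀ k, -(n : ℤ) ≤ k → k ≤ n → y k = x k) ∧
      ∃ q : ℕ, 0 < q ∧ ∀ k, y (k + q) = y k := by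
  obtain ⟨m, hm⟩ : ∃ m : ℕ, m = n + r := ⟨_, rfl⟩
  obtain ⟨q, hq⟩ : ∃ q : ℕ, (q : ℤ) = 2 * m + 1 + M := ⟨(2 * m + 1 + M).toNat, by omega⟩
  obtain ⟨w, hw, hw1, hw2⟩ := hgap x hx _ (hsh x hx (-(q : ℤ))) (m + 1) (q - m) (by omega)
  have hq0 : (0 : ℤ) < q := by omega
  -- `y` repeats the block `w[-m, q - m)`; it agrees with `w` on `[-m, q + m]`.
  refine ⟨fun k => w ((k + m) % q - m), ?_, fun k k1 k2 => ?_, q, by omega, fun k => ?_⟩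
  · apply hX
    intro k
    refine ⟨_, hsh w hw (-(q * ((k + m) / q))), fun j j1 j2 => ?_⟩
    have e1 := Int.emod_add_mul_ediv (k + m) q
    have e2 := Int.emod_nonneg (k + m) hq0.ne'
    have e3 := Int.emod_lt_of_pos (k + m) hq0
    obtain ⟨d, hd⟩ : ∃ d, d = (q : ℤ) * ((k + m) / q) := ⟨_, rfl⟩
    have hjd : (j + m) % q = (j + m - d) % q := by
      rw [hd, Int.sub_mul_emod_self_left]
    rw [← hd] at e1 ⊢
    show w ((j + m) % q - m) = w (j + -d)
    rw [hjd]
    by_cases hlt : j + m - d < q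
    · rw [Int.emod_eq_of_lt (by omega) hlt]
      congr 1
      ring
    · have : (j + m - d) % q = j + m - d - q := by
        rw [← Int.sub_emod_right, Int.emod_eq_of_lt (by omega) (by omega)]
      rw [this, hw2 (j + -d) (by omega), hw1 _ (by omega)]
      congr 1
      ring
  · show w ((k + m) % q - m) = x k
    rw [Int.emod_eq_of_lt (by omega) (by omega), hw1 _ (by omega)]
    congr 1
    ring
  · show w ((k + q + m) % q - m) = w ((k + m) % q - m)
    rw [show k + q + m = k + m + (q : ℤ) by ring, Int.add_emod_right]

lemma finite_periodic {A : Type*} [Finite A] (q : ℕ) (hq : 0 < q) :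
    {y : ℤ → A | ∀ k, y (k + q) = y k}.Finite := by
  refine Set.Finite.of_finite_image (f := fun y (i : Fin q) => y i.1) (Set.toFinite _) ?_
  intro y hy y' hy' h
  have key : ∀ z : ℤ → A, (∀ k, z (k + q) = z k) → ∀ k, z k = z (k % q) := by
    intro z hz k
    have h1 : Function.Periodic z (q : ℤ) := hz
    have := (h1.int_mul (k / q)) (k % q)
    rw [← this]
    congr 1
    have := Int.emod_add_mul_ediv k q
    simp only [Int.cast_id]
    linarith [mul_comm (k / (q : ℤ)) q]
  funext k
  rw [key y hy k, key y' hy' k]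
  have hq' : (0 : ℤ) < q := by exact_mod_cast hq
  have h1 := Int.emod_nonneg k hq'.ne'
  have h2 := Int.emod_lt_of_pos k hq'
  have := congrFun h ⟨(k % q).toNat, by omega⟩
  simpa [Int.toNat_of_nonneg h1] using this

/-! ### Construction of marker families -/

/-- The block `g [0, l)` occurs in `x` starting at position `k`. -/
def BlockAt {A : Type*} (g : ℤ → A) (l : ℤ) (x : ℤ → A) (k : ℤ) : Prop :=
  ∀ j, 0 ≤ j → j < l → x (k + j) = g j

lemma exists_separating_window {A ι : Type*} [Finite ι] (q : ι → ℤ → A)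
    (hq : Function.Injective q) :
    ∃ h : ℕ, ∀ i j, (∀ k, -(h : ℤ) ≤ k → k ≤ h → q i k = q j k) → i = j := by
  have : ∀ ij : ι × ι, ∃ h : ℕ, ij.1 ≠ ij.2 →
      ∃ k, -(h : ℤ) ≤ k ∧ k ≤ h ∧ q ij.1 k ≠ q ij.2 k := by
    intro ij
    by_cases hij : ij.1 = ij.2
    · exact ⟨0, fun h => absurd hij h⟩
    · obtain ⟨k, hk⟩ := Function.ne_iff.1 (hq.ne hij)
      exact ⟨k.natAbs, fun _ => ⟨k, by omega, by omega, hk⟩⟩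
  choose h hh using this
  obtain ⟨M, hM⟩ := Finite.exists_le h
  refine ⟨M, fun i j hij => ?_⟩
  by_contra hne
  obtain ⟨k, k1, k2, k3⟩ := hh (i, j) hne
  have := hM (i, j)
  exact k3 (hij k (by omega) (by omega))

/-- There is a radius `c` such that every `z ∈ X` avoiding the block `g [0, l)` has `p - 1` variants
in `X`, differing from `z` only inside `[-c, c]` and containing the block, whose leftmost occurrence
starts at the same position `l₀` for all of them. Each variant follows `z`, then `g`, then one of
`p` fixed points of `X`, then `z` again; the part up to the end of `g` is shared (`ζ`). -/
lemma exists_alternatives {A : Type*} {X : Set (ℤ → A)} {M : ℤ} {p : ℕ} [NeZero p]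
    (hsh : ∀ x ∈ X, ∀ t : ℤ, (fun n => x (n + t)) ∈ X) (hM : 0 ≤ M) (hgap : Gap X M)
    (hinf : X.Infinite) {g : ℤ → A} (hg : g ∈ X) {l : ℤ} (hl : 0 < l) :
    ∃ c : ℤ, 0 ≤ c ∧ ∀ z ∈ X, (∀ k, ¬ BlockAt g l z k) → ∃ (xs : ZMod p → ℤ → A) (l₀ : ℤ),
      (∀ i, xs i ∈ X) ∧ Function.Injective xs ∧ xs 0 = z ∧
      (∀ i k, (k < -c ∨ c < k) → xs i k = z k) ∧ -c ≤ l₀ ∧ l₀ + l ≤ c ∧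
      ∀ i, i ≠ 0 → BlockAt g l (xs i) l₀ ∧ ∀ k, k < l₀ → ¬ BlockAt g l (xs i) k := by
  classical
  have := hinf.to_subtype
  obtain ⟨q, hqX, hqinj⟩ : ∃ q : ZMod p → ℤ → A, (∀ i, q i ∈ X) ∧ Function.Injective q :=
    ⟨fun i => (Infinite.natEmbedding X i.val : X).1, fun i => Subtype.property _, fun i j hij =>
      ZMod.val_injective p ((Infinite.natEmbedding X).injective (Subtype.ext hij))⟩
  obtain ⟨h, hh⟩ := exists_separating_window q hqinj
  obtain ⟨c₀, hc₀⟩ : ∃ c₀ : ℤ, c₀ = 3 * M + l + 2 * h := ⟨_, rfl⟩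
  refine ⟨c₀ + l, by omega, fun z hz hzg => ?_⟩
  obtain ⟨s, hs⟩ : ∃ s : ℤ, s = -c₀ + M := ⟨_, rfl⟩
  obtain ⟨e, he⟩ : ∃ e : ℤ, e = s + l + M + h := ⟨_, rfl⟩
  obtain ⟨ζ, hζ, hζ1, hζ2⟩ := hgap z hz _ (hsh g hg (-s)) (-c₀) s (by omega)
  have htail : ∀ i, ∃ w ∈ X, (∀ k, k < e + h + 1 → w k = q i (k + -e)) ∧
      ∀ k, c₀ + 1 ≤ k → w k = z k := fun i =>
    hgap _ (hsh (q i) (hqX i) (-e)) z hz (e + h + 1) (c₀ + 1) (by omega)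
  choose w hwX hw1 hw2 using htail
  have hx : ∀ i, ∃ x ∈ X, (∀ k, k < s + l → x k = ζ k) ∧ ∀ k, e - h ≤ k → x k = w i k := fun i =>
    hgap ζ hζ (w i) (hwX i) (s + l) (e - h) (by omega)
  choose x hxX hx1 hx2 using hx
  have hζs : BlockAt g l ζ s := fun j j1 j2 => by
    rw [hζ2 _ (by omega)]
    congr 1
    ring
  have hlow : ∀ k, BlockAt g l ζ k → -c₀ - l ≤ k := by
    intro k hk
    by_contra hlt
    exact hzg k fun j j1 j2 => by rw [← hk j j1 j2, hζ1 _ (by omega)]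
  obtain ⟨l₀, hl₀, hmin⟩ := Int.exists_least_of_bdd (P := BlockAt g l ζ) ⟨_, hlow⟩ ⟨s, hζs⟩
  have hl₀s := hmin s hζs
  have hl₀c := hlow _ hl₀
  have hxl₀ : ∀ i, BlockAt g l (x i) l₀ := fun i j j1 j2 => by
    rw [hx1 i _ (by omega), hl₀ j j1 j2]
  have hxz : ∀ i, x i ≠ z := fun i hi => hzg l₀ (hi ▸ hxl₀ i)
  have hxinj : Function.Injective x := by
    intro i j hij
    apply hh
    intro k k1 k2
    have e1 := hx2 i (k + e) (by omega)
    have e2 := hx2 j (k + e) (by omega)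
    rw [hw1 _ _ (by omega), add_neg_cancel_right] at e1 e2
    rw [← e1, ← e2, hij]
  refine ⟨fun i => if i = 0 then z else x i, l₀, fun i => ?_, fun i j hij => ?_, by simp,
    fun i k hk => ?_, by omega, by omega, fun i hi => ⟨?_, fun k hk hb => ?_⟩⟩
  · by_cases hi : i = 0
    · simpa [hi] using hz
    · simpa [hi] using hxX i
  · by_cases hi : i = 0 <;> by_cases hj : j = 0
    · rw [hi, hj]
    · simp only [hi, hj, if_true, if_false] at hij
      exact absurd hij.symm (hxz j)
    · simp only [hi, hj, if_true, if_false] at hij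
      exact absurd hij (hxz i)
    · simp only [hi, hj, if_false] at hij
      exact hxinj hij
  · by_cases hi : i = 0
    · simp [hi]
    · simp only [hi, if_false]
      rcases hk with hk | hk
      · rw [hx1 i _ (by omega), hζ1 _ (by omega)]
      · rw [hx2 i _ (by omega), hw2 i _ (by omega)]
  · simpa [hi] using hxl₀ i
  · simp only [hi, if_false] at hb
    have := hmin k fun j j1 j2 => by rw [← hb j j1 j2, hx1 i _ (by omega)]
    omega

/-- A point `y` avoiding the block and without small periods has a window `[-K', K']` (after
recentring) with no period up to `K' + 3 * c`. The variants of `y` around the centre of this window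
form a marker family: overlaps of the original with itself are excluded by the lack of periods, all
others by comparing leftmost occurrences of the block. The associated automorphism creates the block
in `y`. -/
lemma exists_marker {A : Type*} {X : Set (ℤ → A)} {M : ℤ} {p r : ℕ} [NeZero p]
    (hsh : ∀ x ∈ X, ∀ t : ℤ, (fun n => x (n + t)) ∈ X) (hM : 0 ≤ M) (hgap : Gap X M)
    (hinf : X.Infinite) {g : ℤ → A} (hg : g ∈ X) {l : ℤ} (hl : 0 < l) (hp : 1 < p) :
    ∃ P : ℤ, ∀ y ∈ X, (∀ k, ¬ BlockAt g l y k) →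
      (∀ t, 1 ≤ t → t ≤ P → ∃ k, y k ≠ y (k + t)) →
      ∃ (xs : ZMod p → ℤ → A) (K c : ℤ), Marker X r xs K c ∧
        ∃ k, BlockAt g l (rot xs K c 1 y) k := by
  have : Fact (1 < p) := ⟨hp⟩
  obtain ⟨c, hc, halt⟩ := exists_alternatives (p := p) hsh hM hgap hinf hg hl
  obtain ⟨P, hP⟩ := exists_window_without_short_period (A := A) (2 * r) (3 * c + 1) (by omega)
  refine ⟨P, fun y hy hyg hyP => ?_⟩
  obtain ⟨i, j, hij, hper⟩ := hP y hyP
  -- Centre the window: `[i, j]` or `[i, j + 1]` becomes `[-K', K']`.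
  obtain ⟨K', hK'⟩ : ∃ K' : ℤ, K' = (j - i + 1) / 2 := ⟨_, rfl⟩
  obtain ⟨o, ho⟩ : ∃ o : ℤ, o = i + K' := ⟨_, rfl⟩
  obtain ⟨xs, l₀, hxsX, hinj, hxs0, hagree, hl1, hl2, hblk⟩ := halt _ (hsh y hy o) (fun k hk =>
    hyg (k + o) fun n n1 n2 => by
      rw [← hk n n1 n2]
      congr 1
      ring)
  have hz : ∀ k, ¬ BlockAt g l (xs 0) k := fun k hk => hyg (k + o) fun n n1 n2 => by
      rw [← hk n n1 n2, hxs0]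
      congr 1
      ring
  have hper0 : ∀ t, 1 ≤ t → t ≤ K' + 3 * c → ¬ PerOn (xs 0) t (-K') K' := by
    intro t t1 t2 ht
    refine hper t t1 (by omega) fun k k1 k2 => ?_
    have := ht (k - o) (by omega) (by omega)
    rw [hxs0] at this
    simp only at this
    rw [show k - o + o = k by ring, show k - o + t + o = k + t by ring] at this
    exact this
  have hagree' : ∀ i j k, (k < -c ∨ c < k) → xs i k = xs j k := fun i j k hk => by
    rw [hagree i k hk, hagree j k hk]
  obtain ⟨K, hK⟩ : ∃ K : ℤ, K = K' + 2 * c := ⟨_, rfl⟩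
  have hmark : Marker X r xs K c := by
    refine ⟨hxsX, hinj, hc, by omega, hagree', ?_⟩
    intro x a b k k' ha hb hkk'
    by_contra hle
    obtain ⟨t, ht⟩ : ∃ t, t = k' - k := ⟨_, rfl⟩
    have hab : ∀ m, t - K ≤ m → m ≤ K → xs a m = xs b (m - t) := by
      intro m m1 m2
      rw [← ha m (by omega) (by omega), ← hb (m - t) (by omega) (by omega)]
      congr 1
      omega
    -- For `t > K' + c` neither central part `[-c, c]` meets the other's window `[-K', K']`,
    -- so `t` would be a period of `xs 0` on that window.
    by_cases htK : K' + c < t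
    · refine hper0 t (by omega) (by omega) fun m m1 m2 => ?_
      have := hab (m + t) (by omega) (by omega)
      rw [add_sub_cancel_right] at this
      rw [hagree' 0 b _ (by omega), ← this, hagree' 0 a _ (by omega)]
    · by_cases ha0 : a = 0
      · subst ha0
        by_cases hb0 : b = 0
        · subst hb0
          refine hper0 t (by omega) (by omega) fun m m1 m2 => ?_
          have := hab (m + t) (by omega) (by omega)
          rw [add_sub_cancel_right] at this
          exact this.symm
        · refine hz (l₀ + t) fun n n1 n2 => ?_
          rw [hab _ (by omega) (by omega), ← (hblk b hb0).1 n n1 n2]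
          congr 1
          ring
      · have hbt : BlockAt g l (xs b) (l₀ - t) := fun n n1 n2 => by
          rw [← (hblk a ha0).1 n n1 n2, hab _ (by omega) (by omega)]
          congr 1
          ring
        by_cases hb0 : b = 0
        · exact hz _ (hb0 ▸ hbt)
        · exact (hblk b hb0).2 _ (by omega) hbt
  refine ⟨xs, K, c, hmark, l₀ + o, fun n n1 n2 => ?_⟩
  have hocc : OccAt xs K 0 y o := fun n _ _ => by
    rw [hxs0]
    simp only
    rw [add_comm]
  rw [hmark.rot_near 1 hocc _ (by omega) (by omega), zero_add,
    ← (hblk 1 one_ne_zero).1 n n1 n2]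
  congr 1
  ring

/-! ### Shifts of finite type as topological systems -/

lemma sft_local {A : Type*} (F : Set (List A)) (hF : F.Finite) :
    ∃ r : ℕ, Local {x : ℤ → A | ∀ w ∈ F, ¬ occursIn w x} r := by
  obtain ⟨r, hr⟩ := (hF.image List.length).bddAbove
  refine ⟨r, fun x hx w hw => ?_⟩
  rintro ⟨k, hk⟩
  obtain ⟨y, hy, hxy⟩ := hx k
  refine hy w hw ⟨k, fun i => ?_⟩
  have h1 : w.length ≤ r := hr ⟨w, hw, rfl⟩
  have h2 := i.2
  rw [← hk i, hxy _ (by omega) (by omega)]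

lemma sft_shift {A : Type*} (F : Set (List A)) (x : ℤ → A)
    (hx : x ∈ {x : ℤ → A | ∀ w ∈ F, ¬ occursIn w x}) (t : ℤ) :
    (fun n => x (n + t)) ∈ {x : ℤ → A | ∀ w ∈ F, ¬ occursIn w x} := by
  rintro w hw ⟨k, hk⟩
  refine hx w hw ⟨k + t, fun i => ?_⟩
  rw [← hk i]
  congr 1
  ring

lemma isOpen_window {A : Type*} [TopologicalSpace A] [DiscreteTopology A] (X : Set (ℤ → A))
    (a : ℤ → A) (i j : ℤ) : IsOpen {x : X | ∀ k, i ≤ k → k < j → x.1 k = a k} := by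
  have h : IsOpen ((Set.Ico i j).pi fun k => ({a k} : Set A)) :=
    isOpen_set_pi (Set.finite_Ico _ _) (fun _ _ => isOpen_discrete _)
  convert h.preimage continuous_subtype_val using 1
  ext x
  simp [Set.mem_pi]

lemma exists_window_subset {A : Type*} [TopologicalSpace A] [DiscreteTopology A]
    {X : Set (ℤ → A)} {U : Set X} (hU : IsOpen U) {a : X} (ha : a ∈ U) :
    ∃ n : ℕ, ∀ x : X, (∀ k, -(n : ℤ) ≤ k → k ≤ n → x.1 k = a.1 k) → x ∈ U := by
  obtain ⟨V, hV, rfl⟩ := isOpen_induced_iff.1 hU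
  obtain ⟨I, u, hu, hsub⟩ := isOpen_pi_iff.1 hV a.1 ha
  refine ⟨I.sup Int.natAbs, fun x hx => hsub fun k hk => ?_⟩
  have : k.natAbs ≤ I.sup Int.natAbs := Finset.le_sup (f := Int.natAbs) hk
  rw [hx k (by omega) (by omega)]
  exact (hu k hk).2

/-- An element whose `p`-th power is trivial, with `p` prime, lies in every subgroup containing one
of its powers of exponent strictly between `0` and `p`. -/
lemma mem_of_pow_eq_one {G : Type*} [Group G] (H : Subgroup G) (a : G) {p k : ℕ}
    (hp : p.Prime) (h1 : a ^ p = 1) (hk0 : 0 < k) (hkp : k < p) (hk : a ^ k ∈ H) : a ∈ H := by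
  have hc : k.gcd p = 1 := (Nat.coprime_of_lt_prime hk0.ne' hkp hp).symm
  have h := Nat.gcd_eq_gcd_ab k p
  rw [hc] at h
  have : a = (a ^ k) ^ (k.gcdA p) := by
    calc a = a ^ ((1 : ℕ) : ℤ) := by simp
      _ = (a ^ k) ^ (k.gcdA p) * (a ^ p) ^ (k.gcdB p) := by
        rw [h, zpow_add, zpow_mul, zpow_mul, zpow_natCast, zpow_natCast]
      _ = _ := by rw [h1, one_zpow, mul_one]
  rw [this]
  exact H.zpow_mem hk _

/-- The block replacement of a marker family as a self-homeomorphism of `X`. -/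
noncomputable def Marker.homeo {A : Type*} [TopologicalSpace A] [DiscreteTopology A] {p : ℕ}
    {X : Set (ℤ → A)} {r : ℕ} {xs : ZMod p → ℤ → A} {K c : ℤ} (m : Marker X r xs K c)
    (hX : Local X r) (hsh : ∀ x ∈ X, ∀ t : ℤ, (fun n => x (n + t)) ∈ X) (s : ZMod p) : X ≃ₜ X where
  toFun x := ⟨rot xs K c s x.1, m.rot_mem hX hsh s x.2⟩
  invFun x := ⟨rot xs K c (-s) x.1, m.rot_mem hX hsh (-s) x.2⟩
  left_inv x := Subtype.ext <| by
    show rot xs K c (-s) (rot xs K c s x.1) = x.1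
    rw [m.rot_rot, add_neg_cancel, m.rot_zero]
  right_inv x := Subtype.ext <| by
    show rot xs K c s (rot xs K c (-s) x.1) = x.1
    rw [m.rot_rot, neg_add_cancel, m.rot_zero]
  continuous_toFun := ((m.continuous_rot s).comp continuous_subtype_val).subtype_mk _
  continuous_invFun := ((m.continuous_rot (-s)).comp continuous_subtype_val).subtype_mk _

lemma Marker.homeo_pow {A : Type*} [TopologicalSpace A] [DiscreteTopology A] {p : ℕ}
    {X : Set (ℤ → A)} {r : ℕ} {xs : ZMod p → ℤ → A} {K c : ℤ} (m : Marker X r xs K c)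
    (hX : Local X r) (hsh : ∀ x ∈ X, ∀ t : ℤ, (fun n => x (n + t)) ∈ X) (n : ℕ) :
    m.homeo hX hsh 1 ^ n = m.homeo hX hsh (n : ZMod p) := by
  induction n with
  | zero =>
    refine Homeomorph.ext fun x => Subtype.ext ?_
    show x.1 = rot xs K c ((0 : ℕ) : ZMod p) x.1
    rw [Nat.cast_zero, m.rot_zero]
  | succ n ih =>
    rw [pow_succ, ih]
    refine Homeomorph.ext fun x => Subtype.ext ?_
    show rot xs K c (n : ZMod p) (rot xs K c 1 x.1) = rot xs K c ((n + 1 : ℕ) : ZMod p) x.1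
    rw [m.rot_rot, Nat.cast_add, Nat.cast_one, add_comm]

lemma homeo_pow_apply {A : Type*} [TopologicalSpace A] (X : Set (ℤ → A))
    (hXinv : ∀ x, x ∈ X ↔ shiftHomeo A x ∈ X) (n : ℕ) (x : X) (k : ℤ) :
    ((restrictHomeo (shiftHomeo A) X hXinv ^ n) x).1 k = x.1 (k + n) := by
  induction n generalizing x with
  | zero =>
    rw [pow_zero]
    show x.1 k = _
    simp
  | succ n ih =>
    rw [pow_succ]
    refine (ih (restrictHomeo (shiftHomeo A) X hXinv x)).trans ?_
    show x.1 (k + n + 1) = _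
    exact congrArg x.1 (by push_cast; ring)

/-- For an infinite topologically mixing shift of finite type `(X,σ)`,
the action on `X` of any finite-index subgroup `H` of the automorphism group
`Aut(X,σ)` (the centralizer of `σ` in the group of self-homeomorphisms of `X`)
is chaotic almost minimal. -/
theorem statement19 {A : Type*} [Fintype A] [TopologicalSpace A] [DiscreteTopology A]
    (F : Set (List A)) (hF : F.Finite)
    (X : Set (ℤ → A)) (hXdef : X = {x | ∀ w ∈ F, ¬ occursIn w x})
    (hXne : X.Nonempty) (hXinf : X.Infinite)
    (hXinv : ∀ x, x ∈ X ↔ shiftHomeo A x ∈ X)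
    (σX : X ≃ₜ X) (hσX : σX = restrictHomeo (shiftHomeo A) X hXinv)
    (hmix : ∀ U V : Set X, IsOpen U → IsOpen V → U.Nonempty → V.Nonempty →
      ∃ N : ℕ, ∀ n : ℕ, N ≤ n → ((σX ^ n) '' U ∩ V).Nonempty)
    (H : Subgroup (X ≃ₜ X)) (hH : H ≤ Subgroup.centralizer {σX})
    (hfin : (H.subgroupOf (Subgroup.centralizer {σX})).FiniteIndex) :
    IsCAM H.subtype := by
  have hsh : ∀ x ∈ X, ∀ t : ℤ, (fun n => x (n + t)) ∈ X := by
    subst hXdef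
    exact sft_shift F
  obtain ⟨r, hr⟩ : ∃ r : ℕ, Local X r := by
    subst hXdef
    exact sft_local F hF
  have hpow : ∀ (n : ℕ) (x : X) (k : ℤ), ((σX ^ n) x).1 k = x.1 (k + n) := by
    subst hσX
    exact homeo_pow_apply X hXinv
  have hcomm : ∀ h ∈ H, ∀ n : ℕ, h * σX ^ n = σX ^ n * h := fun h hh n => by
    have h1 := Subgroup.mem_centralizer_singleton_iff.1 (hH hh)
    exact ((show Commute h σX from h1).pow_right n).eq
  have hσc : σX ∈ Subgroup.centralizer {σX} := Subgroup.mem_centralizer_singleton_iff.2 rfl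
  have hindex : (H.subgroupOf (Subgroup.centralizer {σX})).index ≠ 0 := hfin.index_ne_zero
  have hfinpow : ∀ a ∈ Subgroup.centralizer {σX}, ∃ n : ℕ, 0 < n ∧
      n ≤ (H.subgroupOf (Subgroup.centralizer {σX})).index ∧ a ^ n ∈ H := fun a ha => by
    obtain ⟨n, hn, hn', hmem⟩ := Subgroup.exists_pow_mem_of_index_ne_zero hindex ⟨a, ha⟩
    exact ⟨n, hn, hn', Subgroup.mem_subgroupOf.1 hmem⟩
  obtain ⟨m, hm0, -, hmH⟩ := hfinpow σX hσc
  -- Some power of `σX` lies in `H`, and mixing makes that power transitive.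
  have htrans : ∀ U V : Set X, IsOpen U → IsOpen V → U.Nonempty → V.Nonempty →
      ∃ g : H, ((g : X ≃ₜ X) '' U ∩ V).Nonempty := by
    intro U V hU hV hU' hV'
    obtain ⟨N, hN⟩ := hmix U V hU hV hU' hV'
    refine ⟨⟨(σX ^ m) ^ N, H.pow_mem hmH N⟩, ?_⟩
    show ((((σX ^ m) ^ N : X ≃ₜ X) : X → X) '' U ∩ V).Nonempty
    rw [← pow_mul]
    exact hN _ (Nat.le_mul_of_pos_left N hm0)
  obtain ⟨M, hM, hgap⟩ : ∃ M : ℤ, 0 ≤ M ∧ Gap X M := by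
    refine exists_gap hr hsh fun a ha b hb => ?_
    obtain ⟨N, hN⟩ := hmix _ _ (isOpen_window X a (-r) r) (isOpen_window X b (-r) r)
      ⟨⟨a, ha⟩, fun _ _ _ => rfl⟩ ⟨⟨b, hb⟩, fun _ _ _ => rfl⟩
    refine ⟨N, fun n hn => ?_⟩
    obtain ⟨_, ⟨x, hx, rfl⟩, hx'⟩ := hN n hn
    exact ⟨x.1, x.2, hx, fun k k1 k2 => by rw [← hpow, hx' k k1 k2]⟩
  refine ⟨Subtype.val_injective, htrans, ?_, ?_⟩
  · rw [dense_iff_inter_open]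
    rintro U hU ⟨a, ha⟩
    obtain ⟨n, hn⟩ := exists_window_subset hU ha
    obtain ⟨y, hy, hya, q, hq, hper⟩ := exists_periodic hr hsh hM hgap a.2 n
    refine ⟨⟨y, hy⟩, hn _ hya, ?_⟩
    refine Set.Finite.subset ((finite_periodic (A := A) q hq).preimage
      (Subtype.val_injective (p := (· ∈ X))).injOn) ?_
    rintro _ ⟨h, rfl⟩ k
    have e1 : (σX ^ q) ⟨y, hy⟩ = ⟨y, hy⟩ := Subtype.ext (funext fun k => (hpow q _ k).trans (hper k))
    have e2 : (σX ^ q) (h.1 ⟨y, hy⟩) = h.1 ⟨y, hy⟩ := by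
      have : (h.1 * σX ^ q) ⟨y, hy⟩ = (σX ^ q * h.1) ⟨y, hy⟩ := by rw [hcomm h.1 h.2 q]
      change h.1 ((σX ^ q) ⟨y, hy⟩) = (σX ^ q) (h.1 ⟨y, hy⟩) at this
      rw [← this, e1]
    show (h.1 ⟨y, hy⟩).1 (k + q) = (h.1 ⟨y, hy⟩).1 k
    rw [← hpow, e2]
  · intro Y hYc hYH hYne
    by_contra hYinf
    have hYmem : ∀ h ∈ H, ∀ y ∈ Y, h y ∈ Y := fun h hh y hy => by
      have := hYH ⟨h, hh⟩
      rw [← this]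
      exact ⟨y, hy, rfl⟩
    have hYint : interior Y = ∅ := by
      by_contra hne
      obtain ⟨g, _, ⟨y, hy, rfl⟩, hy'⟩ := htrans (interior Y) Yᶜ isOpen_interior hYc.isOpen_compl
        (Set.nonempty_iff_ne_empty.2 hne) (Set.nonempty_compl.2 hYne)
      exact hy' (hYmem g.1 g.2 y (interior_subset hy))
    -- The finitely many translates of `Y` are closed with empty interior, hence do not cover `X`.
    have hunion : ∀ n : ℕ, interior (⋃ i ∈ Finset.range n, (σX ^ i) '' Y) = ∅ := by
      intro n
      induction n with
      | zero => simp
      | succ n ih =>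
        rw [Finset.range_add_one, Finset.set_biUnion_insert,
          interior_union_isClosed_of_interior_empty ((σX ^ n).isClosedMap Y hYc) ih,
          ← Homeomorph.image_interior, hYint, Set.image_empty]
    have hXnonempty : Nonempty X := hXne.to_subtype
    obtain ⟨a, n, hn⟩ : ∃ (a : X) (n : ℕ), ∀ x : X,
        (∀ k, -(n : ℤ) ≤ k → k ≤ n → x.1 k = a.1 k) →
          x ∉ ⋃ i ∈ Finset.range m, (σX ^ i) '' Y := by
      have hcl : IsClosed (⋃ i ∈ Finset.range m, (σX ^ i) '' Y) :=
        isClosed_biUnion_finset fun i _ => (σX ^ i).isClosedMap Y hYc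
      have hne : (⋃ i ∈ Finset.range m, (σX ^ i) '' Y)ᶜ.Nonempty := by
        by_contra hemp
        have h1 := Set.compl_empty_iff.1 (Set.not_nonempty_iff_eq_empty.1 hemp)
        have h2 := hunion m
        rw [h1, interior_univ] at h2
        exact Set.univ_nonempty.ne_empty h2
      obtain ⟨a, ha⟩ := hne
      obtain ⟨n, hn⟩ := exists_window_subset hcl.isOpen_compl ha
      exact ⟨a, n, hn⟩
    obtain ⟨l, hl⟩ : ∃ l : ℤ, l = 2 * n + 1 := ⟨_, rfl⟩
    obtain ⟨g, hg⟩ : ∃ g : ℤ → A, g = fun k => a.1 (k + -n) := ⟨_, rfl⟩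
    have hgX : g ∈ X := hg ▸ hsh a.1 a.2 (-n)
    -- Translating by multiples of `m` stays in `Y`, so the block is avoided at every position.
    have hYg : ∀ y ∈ Y, ∀ k, ¬ BlockAt g l y.1 k := by
      intro y hy k hk
      have hinv : ∀ (j : ℕ), ∀ y ∈ Y, ((σX ^ m) ^ j)⁻¹ y ∈ Y ∧ ((σX ^ m) ^ j) y ∈ Y := fun j y hy =>
        ⟨hYmem _ (H.inv_mem (H.pow_mem hmH j)) y hy, hYmem _ (H.pow_mem hmH j) y hy⟩
      have hshift : ∀ q : ℤ, ∃ y' ∈ Y, ∀ i, y'.1 i = y.1 (i + m * q) := by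
        intro q
        obtain ⟨j, rfl | rfl⟩ := q.eq_nat_or_neg
        · refine ⟨_, (hinv j y hy).2, fun i => ?_⟩
          rw [← pow_mul, hpow]
          push_cast
          rfl
        · refine ⟨_, (hinv j y hy).1, fun i => ?_⟩
          have e : ((σX ^ m) ^ j) (((σX ^ m) ^ j)⁻¹ y) = y :=
            ((σX ^ m) ^ j).apply_symm_apply y
          conv_rhs => rw [← e]
          generalize ((σX ^ m) ^ j)⁻¹ y = y'
          rw [← pow_mul, hpow]
          exact congrArg y'.1 (by push_cast; ring)
      have hm0' : (0 : ℤ) < m := by exact_mod_cast hm0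
      have d1 := Int.emod_nonneg (k + n) hm0'.ne'
      have d2 := Int.emod_lt_of_pos (k + n) hm0'
      have d3 := Int.emod_add_mul_ediv (k + n) m
      obtain ⟨y', hy', hyy⟩ := hshift ((k + n) / m)
      obtain ⟨i, hi⟩ : ∃ i : ℕ, (i : ℤ) = (k + n) % m :=
        ⟨((k + n) % m).toNat, by omega⟩
      refine hn ((σX ^ i) y') (fun j j1 j2 => ?_) ?_
      · rw [hpow, hyy, hi, add_assoc, d3]
        have := hk (j + n) (by omega) (by omega)
        rw [hg] at this
        simp only [add_neg_cancel_right] at this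
        rw [← this]
        exact congrArg y.1 (by ring)
      · simp only [Set.mem_iUnion, Finset.mem_range]
        exact ⟨i, by omega, y', hy', rfl⟩
    obtain ⟨p, hpI, hp⟩ := Nat.exists_infinite_primes
      ((H.subgroupOf (Subgroup.centralizer {σX})).index + 1)
    -- A prime above the index forces automorphisms of order `p` into `H`.
    have : NeZero p := ⟨hp.ne_zero⟩
    obtain ⟨P, hP⟩ := exists_marker (p := p) (r := r) hsh hM hgap hXinf hgX
      (show 0 < l by omega) hp.one_lt
    -- Only finitely many points have a period at most `P`, so `Y` has a point without one.
    obtain ⟨y, hyY, hyP⟩ : ∃ y ∈ Y, ∀ t, 1 ≤ t → t ≤ P → ∃ k, y.1 k ≠ y.1 (k + t) := by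
      by_contra hcon
      push Not at hcon
      apply hYinf
      have hfinset : (⋃ q ∈ Finset.Icc 1 P.toNat, {y : ℤ → A | ∀ k, y (k + q) = y k}).Finite :=
        Set.Finite.biUnion (Finset.finite_toSet _) fun q hq =>
          finite_periodic q (by have := Finset.mem_Icc.1 hq; omega)
      refine (hfinset.preimage (Subtype.val_injective (p := (· ∈ X))).injOn).subset
        fun y hy => ?_
      obtain ⟨t, t1, t2, ht⟩ := hcon y hy
      simp only [Set.mem_preimage, Set.mem_iUnion, Finset.mem_Icc]
      refine ⟨t.toNat, by omega, fun k => ?_⟩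
      rw [ht k, Int.toNat_of_nonneg (by omega)]
    obtain ⟨xs, K, c, hmark, k, hk⟩ := hP y.1 y.2 (hYg y hyY) hyP
    have hφc : hmark.homeo hr hsh 1 ∈ Subgroup.centralizer {σX} := by
      refine Subgroup.mem_centralizer_singleton_iff.2 (Homeomorph.ext fun x => Subtype.ext ?_)
      have hσ1 : ∀ x : X, (σX x).1 = fun k => x.1 (k + 1) := fun x => funext fun k => by
        have := hpow 1 x k
        rw [pow_one] at this
        simpa using this
      show rot xs K c 1 (σX x).1 = (σX (hmark.homeo hr hsh 1 x)).1
      rw [hσ1, hσ1]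
      exact hmark.rot_shift 1 x.1 1
    have hφp : hmark.homeo hr hsh 1 ^ p = 1 := by
      rw [hmark.homeo_pow hr hsh, ZMod.natCast_self, ← Nat.cast_zero, ← hmark.homeo_pow hr hsh,
        pow_zero]
    obtain ⟨j, hj0, hj1, hj⟩ := hfinpow _ hφc
    have hφH := mem_of_pow_eq_one H _ hp hφp hj0 (by omega) hj
    exact hYg _ (hYmem _ hφH y hyY) k hk
end
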